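/- arXiv:1506.08675 — 5 statements merged into one kernel-verified Lean document; each statement's English description precedes it below -/
import Mathlib

section
/- Let (M, ω) be an almost symplectic manifold and L an involutive Lagrangian distribution on M. Then the torsion tensor T^B of the Bott connection ∇^B in L, defined by T^B(X,Y) = ∇^B_X Y − ∇^B_Y X − [X,Y], satisfies dω(X, Y, Z) = ω(T^B(X,Y), Z) for all X, Y ∈ Γ(L) and Z ∈ Γ(TM). In particular, if ω is closed, then the Bott connection in L has zero torsion. -/
/-!
Write `D` for the flat derivative. By the Leibniz rule (`fderiv_pairing`), the Bott terms give
`ω(T^B(X,Y), z) = (D_X ω)(Y, z) - (D_Y ω)(X, z) + ω(Y, D_z X) - ω(X, D_z Y)`: the terms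
`ω(D_X Y - D_Y X, z)` cancel against `ω([X,Y], z)`. Since `L` is isotropic, `ω(X, Y) = 0` on the
open set `U`; differentiating along `z` and using skew-symmetry,
`(D_z ω)(X, Y) = ω(Y, D_z X) - ω(X, D_z Y)`, and the right-hand side becomes `dω(X, Y, z)`.
Nondegeneracy of `ω` then gives the vanishing of the torsion when `dω = 0`.
-/

open Module Set
noncomputable section

variable {E : Type*} [NormedAddCommGroup E] [NormedSpace ℝ E]

/-- The field of 2-forms `ω` is skew-symmetric at every point of `U`. -/
def IsSkewOn (ω : E → E →L[ℝ] E →L[ℝ] ℝ) (U : Set E) : Prop :=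
  ∀ x ∈ U, ∀ v : E, ω x v v = 0

/-- The field of 2-forms `ω` is nondegenerate at every point of `U`. -/
def IsNondegOn (ω : E → E →L[ℝ] E →L[ℝ] ℝ) (U : Set E) : Prop :=
  ∀ x ∈ U, ∀ v : E, (∀ w : E, ω x v w = 0) → v = 0

/-- The exterior derivative `dω` of the 2-form field `ω`, evaluated at `x` on
the vectors `u, v, w` (constant vector fields have vanishing brackets). -/
def extDeriv2 (ω : E → E →L[ℝ] E →L[ℝ] ℝ) (x u v w : E) : ℝ :=
  fderiv ℝ (fun y => ω y v w) x u - fderiv ℝ (fun y => ω y u w) x v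
    + fderiv ℝ (fun y => ω y u v) x w

/-- The 2-form field `ω` is closed on `U`. -/
def IsClosed2On (ω : E → E →L[ℝ] E →L[ℝ] ℝ) (U : Set E) : Prop :=
  ∀ x ∈ U, ∀ u v w : E, extDeriv2 ω x u v w = 0

/-- Lie bracket of two vector fields. -/
def lieVF (X Y : E → E) (x : E) : E := fderiv ℝ Y x (X x) - fderiv ℝ X x (Y x)

/-- `X` is a smooth section over `U` of the distribution `L`, i.e. `X ∈ Γ(L)`. -/
def TangentTo (L : E → Submodule ℝ E) (U : Set E) (X : E → E) : Prop :=
  ContDiffOn ℝ (⊤ : ℕ∞) X U ∧ ∀ x ∈ U, X x ∈ L x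

/-- `(L_X (ω♭ Y)) x w = X[ω(Y, w)](x) − ω(Y, [X, w])(x)`: the right-hand side in the
characterization `ω(∇^B_X Y, Z) = X[ω(Y,Z)] − ω(Y,[X,Z])` of the Bott connection,
with `Z` frozen to the constant vector field `w` (the expression is tensorial in `Z`). -/
def bottRHS (ω : E → E →L[ℝ] E →L[ℝ] ℝ) (X Y : E → E) (x w : E) : ℝ :=
  fderiv ℝ (fun y => ω y (Y y) w) x (X x) + ω x (Y x) (fderiv ℝ X x w)

/-- `B = ∇^B_X Y` is the Bott covariant derivative of `Y` along `X`:
`ω♭ B = L_X (ω♭ Y)`, i.e. `ω(B, Z) = X[ω(Y,Z)] − ω(Y,[X,Z])` for every `Z`;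
equivalently `B = ω♯ L_X (ω♭ Y)`. -/
def IsBottDeriv (ω : E → E →L[ℝ] E →L[ℝ] ℝ) (U : Set E) (X Y B : E → E) : Prop :=
  ∀ x ∈ U, ∀ w : E, ω x (B x) w = bottRHS ω X Y x w

/-- The covariant derivative `∇_X Y` of the linear connection with Christoffel map `Γ`. -/
def covDeriv (Γ : E → E →L[ℝ] E →L[ℝ] E) (X Y : E → E) (x : E) : E :=
  fderiv ℝ Y x (X x) + Γ x (X x) (Y x)

/-- The connection `Γ` is torsion-free on `U`
(`T(X,Y) = ∇_X Y − ∇_Y X − [X,Y] = 0`; tensorially, `Γ` is symmetric). -/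
def IsTorsionFreeOn (Γ : E → E →L[ℝ] E →L[ℝ] E) (U : Set E) : Prop :=
  ∀ x ∈ U, ∀ u v : E, Γ x u v = Γ x v u

/-- The connection `Γ` parallelizes `ω` on `U`:
`X[ω(Y,Z)] = ω(∇_X Y, Z) + ω(Y, ∇_X Z)` (tensorially, on constant fields). -/
def IsSymplecticConnOn (ω : E → E →L[ℝ] E →L[ℝ] ℝ)
    (Γ : E → E →L[ℝ] E →L[ℝ] E) (U : Set E) : Prop :=
  ∀ x ∈ U, ∀ u v w : E,
    fderiv ℝ (fun y => ω y v w) x u = ω x (Γ x u v) w + ω x v (Γ x u w)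

/-- The connection `Γ` preserves the distribution `L` on `U`:
`∇_X Y ∈ Γ(L)` for every `X ∈ Γ(TM)` and `Y ∈ Γ(L)`. -/
def PreservesOn (Γ : E → E →L[ℝ] E →L[ℝ] E) (L : E → Submodule ℝ E) (U : Set E) : Prop :=
  ∀ Y : E → E, ContDiffOn ℝ (⊤ : ℕ∞) Y U → (∀ x ∈ U, Y x ∈ L x) →
    ∀ x ∈ U, ∀ u : E, fderiv ℝ Y x u + Γ x u (Y x) ∈ L x

/-- The Nijenhuis torsion of the (1,1)-tensor field `N`, evaluated at `x` on `u, v`: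
`T_N(X,Y) = [NX,NY] − N[NX,Y] − N[X,NY] + N²[X,Y]` (tensorial, on constant fields). -/
def nijTorsion (N : E → E →L[ℝ] E) (x u v : E) : E :=
  lieVF (fun y => N y u) (fun y => N y v) x
    - N x (lieVF (fun y => N y u) (fun _ => v) x)
    - N x (lieVF (fun _ => u) (fun y => N y v) x)
    + N x (N x (lieVF (fun _ => u) (fun _ => v) x))

/-- `I_k = (1/k) Tr (N^k)`. -/
def traceInv (N : E → E →L[ℝ] E) (k : ℕ) (x : E) : ℝ :=
  (k : ℝ)⁻¹ * LinearMap.trace ℝ E ((N x ^ k : E →L[ℝ] E) : E →ₗ[ℝ] E)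

/-- Leibniz rule for the pairing of two vector fields by a field of bilinear forms; it also
covers constant fields, whose derivative terms vanish. -/
theorem fderiv_pairing {F : Type*} [NormedAddCommGroup F] [NormedSpace ℝ F]
    {ω : F → F →L[ℝ] F →L[ℝ] ℝ} {V W : F → F} {x : F}
    (hω : DifferentiableAt ℝ ω x) (hV : DifferentiableAt ℝ V x)
    (hW : DifferentiableAt ℝ W x) (z : F) :
    fderiv ℝ (fun y => ω y (V y) (W y)) x z =
      fderiv ℝ ω x z (V x) (W x) + ω x (fderiv ℝ V x z) (W x)
        + ω x (V x) (fderiv ℝ W x z) := by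
  have h := ((hω.hasFDerivAt.clm_apply hV.hasFDerivAt).clm_apply hW.hasFDerivAt).fderiv
  rw [h]
  simp
  ring

/-- Let `(M, ω)` be an almost symplectic manifold and `L` an involutive
Lagrangian distribution on `M`.  Then the torsion tensor `T^B` of the Bott connection `∇^B`
in `L`, defined by `T^B(X,Y) = ∇^B_X Y − ∇^B_Y X − [X,Y]`, satisfies
`dω(X,Y,Z) = ω(T^B(X,Y), Z)` for all `X, Y ∈ Γ(L)` and `Z ∈ Γ(TM)`.
In particular, if `ω` is closed then the Bott connection in `L` has zero torsion. -/
theorem bott_torsion_vs_extDeriv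
    {E : Type*} [NormedAddCommGroup E] [NormedSpace ℝ E] [FiniteDimensional ℝ E]
    (U : Set E) (hU : IsOpen U)
    (ω : E → E →L[ℝ] E →L[ℝ] ℝ) (hωsm : ContDiffOn ℝ (⊤ : ℕ∞) ω U)
    (hskew : IsSkewOn ω U) (hnd : IsNondegOn ω U)
    (L : E → Submodule ℝ E)
    (hLag : ∀ x ∈ U, (∀ u ∈ L x, ∀ v ∈ L x, ω x u v = 0) ∧
      2 * finrank ℝ (L x) = finrank ℝ E)
    (hinv : ∀ X Y : E → E, TangentTo L U X → TangentTo L U Y →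
      ∀ x ∈ U, lieVF X Y x ∈ L x)
    (X Y : E → E) (hX : TangentTo L U X) (hY : TangentTo L U Y)
    (BXY BYX : E → E)
    (hBXY : IsBottDeriv ω U X Y BXY) (hBYX : IsBottDeriv ω U Y X BYX) :
    (∀ x ∈ U, ∀ z : E,
      extDeriv2 ω x (X x) (Y x) z = ω x (BXY x - BYX x - lieVF X Y x) z) ∧
    (IsClosed2On ω U → ∀ x ∈ U, BXY x - BYX x - lieVF X Y x = 0) := by
  have hmain : ∀ x ∈ U, ∀ z : E,
      extDeriv2 ω x (X x) (Y x) z = ω x (BXY x - BYX x - lieVF X Y x) z := by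
    intro x hx z
    have hxU : U ∈ nhds x := hU.mem_nhds hx
    have dω : DifferentiableAt ℝ ω x := (hωsm.contDiffAt hxU).differentiableAt (by simp)
    have dX : DifferentiableAt ℝ X x := (hX.1.contDiffAt hxU).differentiableAt (by simp)
    have dY : DifferentiableAt ℝ Y x := (hY.1.contDiffAt hxU).differentiableAt (by simp)
    have dc : ∀ v : E, DifferentiableAt ℝ (fun _ : E => v) x :=
      fun v => differentiableAt_const v
    -- `ω(X, Y)` vanishes on the neighbourhood `U` of `x`, hence so does its derivative.
    have hzero : fderiv ℝ (fun y => ω y (X y) (Y y)) x z = 0 := by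
      have hev : (fun y => ω y (X y) (Y y)) =ᶠ[nhds x] fun _ => (0 : ℝ) := by
        filter_upwards [hxU] with y hy
        exact (hLag y hy).1 _ (hX.2 y hy) _ (hY.2 y hy)
      rw [hev.fderiv_eq]
      simp
    rw [fderiv_pairing dω dX dY] at hzero
    -- Polarization of `ω(v, v) = 0`.
    have hanti : ω x (fderiv ℝ X x z) (Y x) = - ω x (Y x) (fderiv ℝ X x z) := by
      have h := hskew x hx (fderiv ℝ X x z + Y x)
      simp only [map_add, add_apply, hskew x hx (fderiv ℝ X x z),
        hskew x hx (Y x)] at h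
      linarith
    simp only [map_sub, sub_apply, hBXY x hx z, hBYX x hx z, bottRHS,
      lieVF, extDeriv2]
    rw [fderiv_pairing dω dY (dc z), fderiv_pairing dω dX (dc z),
      fderiv_pairing dω (dc (Y x)) (dc z), fderiv_pairing dω (dc (X x)) (dc z),
      fderiv_pairing dω (dc (X x)) (dc (Y x))]
    simp only [fderiv_fun_const, Pi.zero_apply, zero_apply, map_zero]
    linarith
  refine ⟨hmain, fun hcl x hx => hnd x hx _ fun w => ?_⟩
  rw [← hmain x hx w]
  exact hcl x hx _ _ _
end
end

section
/- Let (M, ω) be a 2n-dimensional symplectic manifold, U ⊆ M open, and f₁, …, f_n smooth functions on U pairwise in involution with linearly independent differentials, defining a Lagrangian foliation of U by their common level sets. Then for every smooth function g whose Hamiltonian vector field Y = ω♯·dg is tangent to the leaves of the foliation, and for every vector field X tangent to the leaves, the Bott connection satisfies ∇^B_X Y = ω♯ L_X (ω♭ Y) = 0; i.e., the Bott connection parallelizes all Hamiltonian vector fields tangent to the leaves. -/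
/-!
The 1-form `ω♭ Y` is `dg`, so `L_X (ω♭ Y) = L_X dg = d (X g)`, and `X g = ω(Y, X)` vanishes on `U`
because `X` and `Y` both take values in a Lagrangian distribution.

`form_eq_zero_of_lagrangian` is the linear algebra: the span `W` of the vectors `X_{f_j}` is
isotropic of half the dimension, hence equals its own `ω`-orthogonal, and a vector is tangent to
the leaves exactly when it lies in that orthogonal.  In `bott_parallelizes_hamiltonian` the identity
`L_X dg = d (X g)` is obtained from the product rule for `y ↦ dg_y (X y)` and the symmetry of the
second derivative of `g`.
-/

open Module Set
noncomputable section

variable {E : Type*} [NormedAddCommGroup E] [NormedSpace ℝ E]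

/-- If `n` linearly independent vectors `e i` span an isotropic subspace of a `2n`-dimensional
symplectic vector space, then any two vectors orthogonal to all of them are orthogonal to each
other. -/
lemma form_eq_zero_of_lagrangian
    {E : Type*} [NormedAddCommGroup E] [NormedSpace ℝ E] [FiniteDimensional ℝ E]
    {n : ℕ} (hdim : finrank ℝ E = 2 * n) (σ : E →L[ℝ] E →L[ℝ] ℝ)
    (hskew : ∀ v, σ v v = 0) (hnd : ∀ v, (∀ w, σ v w = 0) → v = 0)
    (e : Fin n → E) (he : LinearIndependent ℝ e) (hiso : ∀ i j, σ (e i) (e j) = 0)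
    (u v : E) (hu : ∀ i, σ (e i) u = 0) (hv : ∀ i, σ (e i) v = 0) : σ u v = 0 := by
  let B : LinearMap.BilinForm ℝ E := σ.toBilinForm
  have halt : B.IsAlt := hskew
  have hrefl : B.IsRefl := halt.isRefl
  have hnondeg : B.Nondegenerate := hrefl.nondegenerate_iff_separatingLeft.2 hnd
  let W : Submodule ℝ E := Submodule.span ℝ (Set.range e)
  have horth : ∀ z, (∀ i, σ (e i) z = 0) → z ∈ B.orthogonal W := by
    intro z hz
    rw [LinearMap.BilinForm.mem_orthogonal_iff]
    intro a ha
    change B a z = 0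
    induction ha using Submodule.span_induction with
    | mem a ha => obtain ⟨i, rfl⟩ := ha; exact hz i
    | zero => simp
    | add a b _ _ h₁ h₂ => simp [h₁, h₂]
    | smul c a _ h => simp [h]
  have hle : W ≤ B.orthogonal W := by
    refine Submodule.span_le.2 ?_
    rintro _ ⟨j, rfl⟩
    exact horth _ fun i => hiso i j
  have hW : finrank ℝ W = n := by
    simpa using finrank_span_eq_card he
  have heq : W = B.orthogonal W := by
    refine Submodule.eq_of_le_of_finrank_eq hle ?_
    rw [LinearMap.BilinForm.finrank_orthogonal hnondeg, hdim, hW]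
    omega
  have huW : u ∈ W := heq ▸ horth u hu
  exact (LinearMap.BilinForm.mem_orthogonal_iff.1 (horth v hv)) u huW

/-- Let `(M, ω)` be a `2n`-dimensional symplectic manifold, `U ⊆ M` open,
and `f₁, …, f_n` smooth functions on `U` pairwise in involution with linearly independent
differentials, defining a Lagrangian foliation of `U` by their common level sets.  Then for
every smooth function `g` whose Hamiltonian vector field `Y = ω♯·dg` is tangent to the
leaves, and every vector field `X` tangent to the leaves, the Bott connection satisfies
`∇^B_X Y = ω♯ L_X (ω♭ Y) = 0`; by nondegeneracy of `ω` this is the statement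
`L_X (ω♭ Y) = 0`, i.e. `X[ω(Y,Z)] − ω(Y,[X,Z]) = 0` for every `Z`. -/
theorem bott_parallelizes_hamiltonian
    {E : Type*} [NormedAddCommGroup E] [NormedSpace ℝ E] [FiniteDimensional ℝ E]
    {n : ℕ} (hdim : finrank ℝ E = 2 * n)
    (U : Set E) (hU : IsOpen U)
    (ω : E → E →L[ℝ] E →L[ℝ] ℝ) (hωsm : ContDiffOn ℝ (⊤ : ℕ∞) ω U)
    (hskew : IsSkewOn ω U) (hnd : IsNondegOn ω U) (hcl : IsClosed2On ω U)
    (f : Fin n → E → ℝ) (hf : ∀ i, ContDiffOn ℝ (⊤ : ℕ∞) (f i) U)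
    (Xf : Fin n → E → E)
    (hXf : ∀ i, ∀ x ∈ U, ∀ v : E, ω x (Xf i x) v = fderiv ℝ (f i) x v)
    (hinvol : ∀ i j, ∀ x ∈ U, ω x (Xf i x) (Xf j x) = 0)
    (hindep : ∀ x ∈ U, LinearIndependent ℝ (fun i => fderiv ℝ (f i) x))
    (g : E → ℝ) (hg : ContDiffOn ℝ (⊤ : ℕ∞) g U)
    (Y : E → E) (hYsm : ContDiffOn ℝ (⊤ : ℕ∞) Y U)
    (hYham : ∀ x ∈ U, ∀ v : E, ω x (Y x) v = fderiv ℝ g x v)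
    (hYtan : ∀ x ∈ U, ∀ i, fderiv ℝ (f i) x (Y x) = 0)
    (X : E → E) (hXsm : ContDiffOn ℝ (⊤ : ℕ∞) X U)
    (hXtan : ∀ x ∈ U, ∀ i, fderiv ℝ (f i) x (X x) = 0) :
    ∀ x ∈ U, ∀ w : E, bottRHS ω X Y x w = 0 := by
  intro x hx w
  have hUx : U ∈ nhds x := hU.mem_nhds hx
  have hXg : ∀ y ∈ U, fderiv ℝ g y (X y) = 0 := by
    intro y hy
    rw [← hYham y hy]
    -- Independence of the differentials transfers to the Hamiltonian fields, since `ω♭` maps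
    -- the latter to the former.
    have hlin : LinearIndependent ℝ (fun i => Xf i y) := by
      refine LinearIndependent.of_comp (ω y).toLinearMap ?_
      convert hindep y hy using 1
      funext i
      ext v
      exact hXf i y hy v
    refine form_eq_zero_of_lagrangian hdim (ω y) (hskew y hy) (hnd y hy) (fun i => Xf i y) hlin
      (fun i j => hinvol i j y hy) _ _ (fun i => ?_) (fun i => ?_)
    · rw [hXf i y hy, hYtan y hy]
    · rw [hXf i y hy, hXtan y hy]
  have hgx : ContDiffAt ℝ (⊤ : ℕ∞) g x := hg.contDiffAt hUx
  have hdg : DifferentiableAt ℝ (fderiv ℝ g) x :=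
    (hgx.fderiv_right (m := 1) (by norm_cast)).differentiableAt (by simp)
  have hdX : DifferentiableAt ℝ X x := (hXsm.contDiffAt hUx).differentiableAt (by simp)
  have hsymm : IsSymmSndFDerivAt ℝ g x := hgx.isSymmSndFDerivAt (by simp; norm_cast)
  have h₁ : fderiv ℝ (fun y => ω y (Y y) w) x = fderiv ℝ (fun y => fderiv ℝ g y w) x := by
    apply Filter.EventuallyEq.fderiv_eq
    filter_upwards [hUx] with y hy using hYham y hy w
  have h₂ : fderiv ℝ (fun y => fderiv ℝ g y (X y)) x = 0 := by
    have : (fun y => fderiv ℝ g y (X y)) =ᶠ[nhds x] fun _ => (0 : ℝ) := by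
      filter_upwards [hUx] with y hy using hXg y hy
    rw [this.fderiv_eq]
    simp
  have h₃ := congrArg (fun φ : E →L[ℝ] ℝ => φ w) h₂
  rw [fderiv_clm_apply hdg hdX] at h₃
  simp only [add_apply, ContinuousLinearMap.comp_apply,
    ContinuousLinearMap.flip_apply, zero_apply] at h₃
  rw [bottRHS, h₁, hYham x hx, fderiv_clm_apply hdg (differentiableAt_const w)]
  simp only [fderiv_fun_const, Pi.zero_apply, ContinuousLinearMap.comp_zero, zero_add,
    ContinuousLinearMap.flip_apply]
  rw [hsymm.eq]
  linarith
end
end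

section
/- Let (M, ω) be a 2n-dimensional symplectic manifold carrying a Lagrangian foliation with tangent distribution L, and suppose Y₁, …, Y_n are Hamiltonian vector fields tangent to the leaves that at each point span the tangent space to the leaf. Then the Bott connection ∇^B_X Y = ω♯ L_X (ω♭ Y) is the unique partial connection in L along L parallelizing all the vector fields Y₁, …, Y_n. -/
/-!
Each `Yᵢ` is parallel for the Bott connection because `L_X (ω♭ Yᵢ) = L_X dgᵢ = d(dgᵢ(X))`, and
`dgᵢ(X) = ω(Yᵢ, X)` vanishes identically for `X` tangent to the Lagrangian leaves
(`bottRHS_hamiltonian_eq_zero`).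

For uniqueness, the `n` fields `Yᵢ` spanning the rank-`n` distribution `L` form a smooth frame, so
every section is `Y = ∑ fᵢ Yᵢ` with smooth `fᵢ` (`exists_smooth_frame_coeff`). A connection and
`Y ↦ ω♯ L_X (ω♭ Y)` satisfy the same Leibniz rule; when both kill the `Yᵢ`, both send `Y` to
`∑ X(fᵢ) Yᵢ` (`IsPartialConnOn.apply_sum_smul`, `bottRHS_sum_smul`).
-/

open Module Set
noncomputable section

variable {E : Type*} [NormedAddCommGroup E] [NormedSpace ℝ E]

/-- `D` is a partial linear connection in `L` along `L` over `U`, acting on smooth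
sections of `L` over `U`: it is local on `U`, takes values in `L`, is `C^∞(U)`-linear
in the first argument and a derivation in the second argument. -/
structure IsPartialConnOn (U : Set E) (L : E → Submodule ℝ E)
    (D : (E → E) → (E → E) → (E → E)) : Prop where
  localOn : ∀ X X' Y Y' : E → E, (∀ x ∈ U, X x = X' x) → (∀ x ∈ U, Y x = Y' x) →
    ∀ x ∈ U, D X Y x = D X' Y' x
  mem : ∀ X Y : E → E, TangentTo L U X → TangentTo L U Y → ∀ x ∈ U, D X Y x ∈ L x
  addLeft : ∀ X X' Y : E → E, TangentTo L U X → TangentTo L U X' → TangentTo L U Y →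
    ∀ x ∈ U, D (X + X') Y x = D X Y x + D X' Y x
  smulLeft : ∀ (f : E → ℝ) (X Y : E → E), ContDiffOn ℝ (⊤ : ℕ∞) f U →
    TangentTo L U X → TangentTo L U Y →
    ∀ x ∈ U, D (fun y => f y • X y) Y x = f x • D X Y x
  addRight : ∀ X Y Y' : E → E, TangentTo L U X → TangentTo L U Y → TangentTo L U Y' →
    ∀ x ∈ U, D X (Y + Y') x = D X Y x + D X Y' x
  leibniz : ∀ (f : E → ℝ) (X Y : E → E), ContDiffOn ℝ (⊤ : ℕ∞) f U →
    TangentTo L U X → TangentTo L U Y →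
    ∀ x ∈ U, D X (fun y => f y • Y y) x = f x • D X Y x + fderiv ℝ f x (X x) • Y x

/-- `D` parallelizes every Hamiltonian vector field tangent to the leaves
(i.e. tangent to the distribution `L`). -/
def ParallelizesHamOn (ω : E → E →L[ℝ] E →L[ℝ] ℝ) (U : Set E) (L : E → Submodule ℝ E)
    (D : (E → E) → (E → E) → (E → E)) : Prop :=
  ∀ (g : E → ℝ) (Yg : E → E), ContDiffOn ℝ (⊤ : ℕ∞) g U → ContDiffOn ℝ (⊤ : ℕ∞) Yg U →
    (∀ x ∈ U, ∀ v : E, ω x (Yg x) v = fderiv ℝ g x v) →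
    (∀ x ∈ U, Yg x ∈ L x) →
    ∀ X : E → E, TangentTo L U X → ∀ x ∈ U, D X Yg x = 0

/-- The Lie derivative along a leafwise field `X` of the closed form `ω♭ V = dh` vanishes when
`V` is leafwise: pairing with `w`, it is the `w`-derivative of `dh(X) = ω(V, X)`, which is zero
because the leaves are isotropic. Symmetry of the second derivative of `h` exchanges
`X` and `w`. -/
lemma bottRHS_hamiltonian_eq_zero
    {E : Type*} [NormedAddCommGroup E] [NormedSpace ℝ E]
    {U : Set E} (hU : IsOpen U) {ω : E → E →L[ℝ] E →L[ℝ] ℝ} {h : E → ℝ} {V X : E → E}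
    (hh : ContDiffOn ℝ (⊤ : ℕ∞) h U) (hX : ContDiffOn ℝ (⊤ : ℕ∞) X U)
    (hham : ∀ x ∈ U, ∀ v : E, ω x (V x) v = fderiv ℝ h x v)
    (hiso : ∀ x ∈ U, ω x (V x) (X x) = 0) {x : E} (hx : x ∈ U) (w : E) :
    bottRHS ω X V x w = 0 := by
  have hUx : U ∈ nhds x := hU.mem_nhds hx
  have hhx : ContDiffAt ℝ (⊤ : ℕ∞) h x := hh.contDiffAt hUx
  have hXd : DifferentiableAt ℝ X x := (hX.contDiffAt hUx).differentiableAt (by simp)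
  have hdd : DifferentiableAt ℝ (fderiv ℝ h) x :=
    (hhx.fderiv_right (m := 1) (by norm_cast)).differentiableAt (by simp)
  have hsymm : IsSymmSndFDerivAt ℝ h x :=
    hhx.isSymmSndFDerivAt (by simp; norm_cast)
  have e1 : (fun y => ω y (V y) w) =ᶠ[nhds x] fun y => fderiv ℝ h y w := by
    filter_upwards [hUx] with y hy using hham y hy w
  have e2 : (fun y => fderiv ℝ h y (X y)) =ᶠ[nhds x] fun _ => (0 : ℝ) := by
    filter_upwards [hUx] with y hy
    rw [← hham y hy, hiso y hy]
  have h1 : fderiv ℝ (fun y => fderiv ℝ h y w) x (X x) = fderiv ℝ (fderiv ℝ h) x (X x) w := by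
    rw [fderiv_clm_apply hdd (differentiableAt_const w)]
    simp
  have h2 : fderiv ℝ (fun y => fderiv ℝ h y (X y)) x w
      = fderiv ℝ h x (fderiv ℝ X x w) + fderiv ℝ (fderiv ℝ h) x w (X x) := by
    rw [fderiv_clm_apply hdd hXd]
    simp
  rw [e2.fderiv_eq] at h2
  simp only [fderiv_fun_const, Pi.zero_apply, zero_apply] at h2
  rw [bottRHS, e1.fderiv_eq, h1, hham x hx, hsymm.eq (X x) w]
  linarith

/-- A smooth field lying in the pointwise span of a smooth frame has smooth coefficients.
Near a point `x₀`, composing with a fixed left inverse `S` of the frame map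
`T x₀ : (c ↦ ∑ cᵢ Vᵢ(x₀))` gives the invertible family `S ∘ T x`, and the coefficients are
`(S ∘ T x)⁻¹ (S (Y x))`. -/
lemma exists_smooth_frame_coeff
    {E : Type*} [NormedAddCommGroup E] [NormedSpace ℝ E] [FiniteDimensional ℝ E]
    {n : ℕ} {U : Set E} (hU : IsOpen U) {V : Fin n → E → E} {Y : E → E}
    (hV : ∀ i, ContDiffOn ℝ (⊤ : ℕ∞) (V i) U) (hY : ContDiffOn ℝ (⊤ : ℕ∞) Y U)
    (hli : ∀ x ∈ U, LinearIndependent ℝ (fun i => V i x))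
    (hmem : ∀ x ∈ U, Y x ∈ Submodule.span ℝ (Set.range fun i => V i x)) :
    ∃ f : Fin n → E → ℝ, (∀ i, ContDiffOn ℝ (⊤ : ℕ∞) (f i) U) ∧
      ∀ x ∈ U, Y x = ∑ i, f i x • V i x := by
  have hc : ∀ x, ∃ c : Fin n → ℝ, x ∈ U → Y x = ∑ i, c i • V i x := by
    intro x
    by_cases hx : x ∈ U
    · obtain ⟨c, hc⟩ := (Submodule.mem_span_range_iff_exists_fun ℝ).1 (hmem x hx)
      exact ⟨c, fun _ => hc.symm⟩
    · exact ⟨0, fun h => absurd h hx⟩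
  choose c hc using hc
  refine ⟨fun i x => c x i, ?_, hc⟩
  suffices hcs : ContDiffOn ℝ (⊤ : ℕ∞) c U from fun i => contDiffOn_pi.1 hcs i
  intro x₀ hx₀
  refine ContDiffAt.contDiffWithinAt ?_
  have hUx := hU.mem_nhds hx₀
  let T : E → (Fin n → ℝ) →L[ℝ] E := fun x =>
    ∑ i, (ContinuousLinearMap.proj (R := ℝ) (φ := fun _ : Fin n => ℝ) i).smulRight (V i x)
  have hT : ∀ x a, T x a = ∑ i, a i • V i x := by
    intro x a
    simp [T]
  have hTs : ContDiffAt ℝ (⊤ : ℕ∞) T x₀ := by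
    refine ContDiffAt.sum fun i _ => ?_
    exact contDiffAt_const.smulRight ((hV i).contDiffAt hUx)
  have hker : LinearMap.ker (T x₀ : (Fin n → ℝ) →ₗ[ℝ] E) = ⊥ := by
    rw [LinearMap.ker_eq_bot']
    intro a ha
    have ha' : ∑ i, a i • V i x₀ = 0 := by rw [← hT]; exact ha
    funext i
    exact Fintype.linearIndependent_iff.1 (hli x₀ hx₀) a ha' i
  obtain ⟨S₀, hS₀⟩ := LinearMap.exists_leftInverse_of_injective _ hker
  let S : E →L[ℝ] (Fin n → ℝ) := LinearMap.toContinuousLinearMap S₀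
  have hS : S.comp (T x₀) = ContinuousLinearMap.id ℝ _ := by
    ext1 a
    exact LinearMap.congr_fun hS₀ a
  let A : E → (Fin n → ℝ) →L[ℝ] (Fin n → ℝ) := fun x => S.comp (T x)
  have hAs : ContDiffAt ℝ (⊤ : ℕ∞) A x₀ := contDiffAt_const.clm_comp hTs
  have hA0 : A x₀ = ((ContinuousLinearEquiv.refl ℝ (Fin n → ℝ) :
      (Fin n → ℝ) ≃L[ℝ] (Fin n → ℝ)) : (Fin n → ℝ) →L[ℝ] (Fin n → ℝ)) := hS
  have hinvs : ContDiffAt ℝ (⊤ : ℕ∞) (fun x => (A x).inverse) x₀ := by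
    refine ContDiffAt.comp x₀ (g := ContinuousLinearMap.inverse) ?_ hAs
    rw [hA0]
    exact contDiffAt_map_inverse _
  have hinvert : ∀ᶠ x in nhds x₀, A x ∈ Set.range
      (fun e : (Fin n → ℝ) ≃L[ℝ] (Fin n → ℝ) => (e : (Fin n → ℝ) →L[ℝ] (Fin n → ℝ))) := by
    refine hAs.continuousAt.eventually_mem ?_
    rw [hA0]
    exact ContinuousLinearEquiv.nhds _
  have hsm : ContDiffAt ℝ (⊤ : ℕ∞) (fun x => (A x).inverse (S (Y x))) x₀ :=
    hinvs.clm_apply (contDiffAt_const.clm_apply (hY.contDiffAt hUx))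
  refine hsm.congr_of_eventuallyEq ?_
  filter_upwards [hinvert, hUx] with x ⟨e, he⟩ hx
  have hYx : S (Y x) = e (c x) := by
    have h1 : e (c x) = A x (c x) := by rw [← he]; rfl
    rw [h1, hc x hx, ← hT]
    rfl
  rw [hYx, ← he, ContinuousLinearMap.inverse_equiv]
  simp

lemma TangentTo.smul {E : Type*} [NormedAddCommGroup E] [NormedSpace ℝ E]
    {L : E → Submodule ℝ E} {U : Set E} {f : E → ℝ} {Y : E → E}
    (hY : TangentTo L U Y) (hf : ContDiffOn ℝ (⊤ : ℕ∞) f U) :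
    TangentTo L U (fun y => f y • Y y) :=
  ⟨hf.smul hY.1, fun x hx => (L x).smul_mem _ (hY.2 x hx)⟩

/-- A partial connection that parallelizes the fields `V i` is determined on their smooth
combinations by the Leibniz rule. -/
lemma IsPartialConnOn.apply_sum_smul
    {E : Type*} [NormedAddCommGroup E] [NormedSpace ℝ E] {ι : Type*}
    {U : Set E} {L : E → Submodule ℝ E} {D : (E → E) → (E → E) → (E → E)}
    (hD : IsPartialConnOn U L D) {V : ι → E → E} (hV : ∀ i, TangentTo L U (V i))
    {X : E → E} (hX : TangentTo L U X) (hpar : ∀ i, ∀ x ∈ U, D X (V i) x = 0)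
    {f : ι → E → ℝ} (hf : ∀ i, ContDiffOn ℝ (⊤ : ℕ∞) (f i) U)
    {x : E} (hx : x ∈ U) (s : Finset ι) :
    TangentTo L U (∑ i ∈ s, fun y => f i y • V i y) ∧
    D X (∑ i ∈ s, fun y => f i y • V i y) x = ∑ i ∈ s, fderiv ℝ (f i) x (X x) • V i x := by
  classical
  induction s using Finset.induction_on with
  | empty =>
    have h0 : TangentTo L U (0 : E → E) := ⟨contDiffOn_const, fun x _ => (L x).zero_mem⟩
    refine ⟨by simpa using h0, ?_⟩
    have h := hD.addRight X 0 0 hX h0 h0 x hx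
    rw [add_zero] at h
    simpa using h
  | insert i s hi ih =>
    have hi' := (hV i).smul (hf i)
    rw [Finset.sum_insert hi, Finset.sum_insert hi]
    refine ⟨⟨hi'.1.add ih.1.1, fun y hy => (L y).add_mem (hi'.2 y hy) (ih.1.2 y hy)⟩, ?_⟩
    rw [hD.addRight X _ _ hX hi' ih.1 x hx, ih.2, hD.leibniz (f i) X (V i) (hf i) hX (hV i) x hx,
      hpar i x hx, smul_zero, zero_add]

/-- The Leibniz rule for `Y ↦ L_X (ω♭ Y)`, on smooth combinations of fields. -/
lemma bottRHS_sum_smul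
    {E : Type*} [NormedAddCommGroup E] [NormedSpace ℝ E] {n : ℕ}
    {U : Set E} (hU : IsOpen U) {ω : E → E →L[ℝ] E →L[ℝ] ℝ}
    (hω : ContDiffOn ℝ (⊤ : ℕ∞) ω U) {V : Fin n → E → E}
    (hV : ∀ i, ContDiffOn ℝ (⊤ : ℕ∞) (V i) U)
    {f : Fin n → E → ℝ} (hf : ∀ i, ContDiffOn ℝ (⊤ : ℕ∞) (f i) U) {X Y : E → E}
    (hY : ∀ x ∈ U, Y x = ∑ i, f i x • V i x) {x : E} (hx : x ∈ U) (w : E) :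
    bottRHS ω X Y x w
      = ∑ i, (f i x * bottRHS ω X (V i) x w + fderiv ℝ (f i) x (X x) * ω x (V i x) w) := by
  have hUx : U ∈ nhds x := hU.mem_nhds hx
  have e : (fun y => ω y (Y y) w) =ᶠ[nhds x] fun y => ∑ i, f i y * ω y (V i y) w := by
    filter_upwards [hUx] with y hy
    simp [hY y hy]
  have hfd : ∀ i, DifferentiableAt ℝ (f i) x := fun i =>
    ((hf i).contDiffAt hUx).differentiableAt (by simp)
  have hVd : ∀ i, DifferentiableAt ℝ (fun y => ω y (V i y) w) x := fun i =>
    (((hω.contDiffAt hUx).clm_apply ((hV i).contDiffAt hUx)).clm_apply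
      contDiffAt_const).differentiableAt (by simp)
  have hder : HasFDerivAt (fun y => ∑ i, f i y * ω y (V i y) w)
      (∑ i, (f i x • fderiv ℝ (fun y => ω y (V i y) w) x + ω x (V i x) w • fderiv ℝ (f i) x)) x :=
    HasFDerivAt.fun_sum fun i _ => (hfd i).hasFDerivAt.mul (hVd i).hasFDerivAt
  rw [bottRHS, e.fderiv_eq, hder.fderiv, hY x hx]
  simp only [bottRHS, sum_apply, add_apply, map_sum,
    map_smul, smul_apply, smul_eq_mul]
  rw [← Finset.sum_add_distrib]
  exact Finset.sum_congr rfl fun i _ => by ring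

/-- Let `(M, ω)` be a `2n`-dimensional symplectic manifold carrying a
Lagrangian foliation with tangent distribution `L`, and suppose `Y₁, …, Y_n` are
Hamiltonian vector fields tangent to the leaves that at each point span the tangent space
to the leaf.  Then the Bott connection `∇^B_X Y = ω♯ L_X (ω♭ Y)` is the unique partial
connection in `L` along `L` parallelizing all the vector fields `Y₁, …, Y_n`:
it parallelizes each `Y_i` (first conjunct: `ω♭(∇^B_X Y_i) = L_X(ω♭ Y_i) = 0`), and any
partial connection parallelizing each `Y_i` coincides with it (second conjunct). -/
theorem bott_unique_parallelizing_frame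
    {E : Type*} [NormedAddCommGroup E] [NormedSpace ℝ E] [FiniteDimensional ℝ E]
    {n : ℕ} (hdim : finrank ℝ E = 2 * n)
    (U : Set E) (hU : IsOpen U)
    (ω : E → E →L[ℝ] E →L[ℝ] ℝ) (hωsm : ContDiffOn ℝ (⊤ : ℕ∞) ω U)
    (hskew : IsSkewOn ω U) (hnd : IsNondegOn ω U) (hcl : IsClosed2On ω U)
    (L : E → Submodule ℝ E)
    (hLag : ∀ x ∈ U, (∀ u ∈ L x, ∀ v ∈ L x, ω x u v = 0) ∧ finrank ℝ (L x) = n)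
    (hinv : ∀ X Y : E → E, TangentTo L U X → TangentTo L U Y →
      ∀ x ∈ U, lieVF X Y x ∈ L x)
    (g : Fin n → E → ℝ) (hg : ∀ i, ContDiffOn ℝ (⊤ : ℕ∞) (g i) U)
    (Yf : Fin n → E → E) (hYsm : ∀ i, ContDiffOn ℝ (⊤ : ℕ∞) (Yf i) U)
    (hYham : ∀ i, ∀ x ∈ U, ∀ v : E, ω x (Yf i x) v = fderiv ℝ (g i) x v)
    (hYtan : ∀ i, ∀ x ∈ U, Yf i x ∈ L x)
    (hspan : ∀ x ∈ U, Submodule.span ℝ (Set.range fun i => Yf i x) = L x) :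
    (∀ X : E → E, TangentTo L U X → ∀ i, ∀ x ∈ U, ∀ w : E, bottRHS ω X (Yf i) x w = 0) ∧
    (∀ D : (E → E) → (E → E) → (E → E), IsPartialConnOn U L D →
      (∀ i, ∀ X : E → E, TangentTo L U X → ∀ x ∈ U, D X (Yf i) x = 0) →
      ∀ X Y : E → E, TangentTo L U X → TangentTo L U Y → ∀ x ∈ U, ∀ w : E,
        ω x (D X Y x) w = bottRHS ω X Y x w) := by
  have hYT : ∀ i, TangentTo L U (Yf i) := fun i => ⟨hYsm i, hYtan i⟩
  have hpar : ∀ X : E → E, TangentTo L U X → ∀ i, ∀ x ∈ U, ∀ w : E,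
      bottRHS ω X (Yf i) x w = 0 := fun X hX i x hx w =>
    bottRHS_hamiltonian_eq_zero hU (hg i) hX.1 (hYham i)
      (fun y hy => (hLag y hy).1 _ (hYtan i y hy) _ (hX.2 y hy)) hx w
  refine ⟨hpar, fun D hD hDpar X Y hX hY x hx w => ?_⟩
  -- `n` vectors spanning the `n`-dimensional space `L x` are linearly independent.
  have hli : ∀ x ∈ U, LinearIndependent ℝ (fun i => Yf i x) := fun x hx => by
    rw [linearIndependent_iff_card_eq_finrank_span, Set.finrank, hspan x hx, (hLag x hx).2,
      Fintype.card_fin]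
  obtain ⟨f, hf, hYf⟩ := exists_smooth_frame_coeff hU hYsm hY.1 hli
    (fun x hx => by rw [hspan x hx]; exact hY.2 x hx)
  rw [bottRHS_sum_smul hU hωsm hYsm hf hYf hx w,
    hD.localOn X X Y (∑ i, fun y => f i y • Yf i y) (fun _ _ => rfl)
      (fun y hy => by rw [hYf y hy, Finset.sum_apply]) x hx,
    (hD.apply_sum_smul hYT hX (fun i => hDpar i X hX) hf hx Finset.univ).2]
  simp [hpar X hX _ x hx]
end
end

section
/- Let (M, ω, N) be an ωN manifold, and set I_k = (1/k) Tr(N^k) for k ≥ 1. Then the differentials of the functions I_k satisfy the Lenard recursion relation N* dI_k = dI_{k+1} for all k, where N* is the adjoint (transpose) of N acting on 1-forms. In particular, if N = ω₂♯ ω₁♭ is the recursion operator of two Magri-compatible symplectic forms ω₁ and ω₂, then ω₂♯ · dI_k = ω₁♯ · dI_{k+1}. -/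
/-!
Write `D_u` for the derivative of `N` at a point in the direction `u`, and let `S_u` be the operator
`v ↦ D_v u`. On constant vector fields the vanishing of the Nijenhuis torsion reads
`D_{Nu} - N D_u = S_u N - N S_u` (`torsion_operator`). Multiplying by `N ^ (k - 1)` and taking
traces, the right-hand side vanishes by cyclicity, so `Tr(N ^ (k - 1) D_{Nu}) = Tr(N ^ k D_u)`.
Since `dI_k(u) = Tr(N ^ (k - 1) D_u)` (`fderiv_traceInv`), this is the Lenard recursion.

For the second claim, skew-symmetry of the two forms and `ω₂(Nu, v) = ω(u, v)` give
`ω₂(z, Nv) = ω(z, v)`, so that `ω₂♭ z = dI_k` implies `ω♭ z = N* dI_k = dI_{k+1}`.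
-/

open Module Set
noncomputable section

variable {E : Type*} [NormedAddCommGroup E] [NormedSpace ℝ E]

/-- The trace of a continuous endomorphism of `E`, as a continuous linear functional. -/
def traceCLM (E : Type*) [NormedAddCommGroup E] [NormedSpace ℝ E] [FiniteDimensional ℝ E] :
    (E →L[ℝ] E) →L[ℝ] ℝ :=
  LinearMap.toContinuousLinearMap
    ((LinearMap.trace ℝ E).comp (ContinuousLinearMap.coeLM ℝ))

lemma traceCLM_apply [FiniteDimensional ℝ E] (A : E →L[ℝ] E) :
    traceCLM E A = LinearMap.trace ℝ E (A : E →ₗ[ℝ] E) := rfl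

lemma traceCLM_mul_comm [FiniteDimensional ℝ E] (A B : E →L[ℝ] E) :
    traceCLM E (A * B) = traceCLM E (B * A) :=
  LinearMap.trace_mul_comm ℝ (A : E →ₗ[ℝ] E) (B : E →ₗ[ℝ] E)

/-- `dI_k(u) = Tr(N ^ (k - 1) D_u N)`: by cyclicity of the trace, the `k` terms of the
noncommutative Leibniz rule for `N ^ k` contribute equally. The index is shifted by one. -/
lemma fderiv_traceInv [FiniteDimensional ℝ E] {N : E → E →L[ℝ] E} {x : E}
    (hN : DifferentiableAt ℝ N x) (k : ℕ) (u : E) :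
    fderiv ℝ (traceInv N (k + 1)) x u = traceCLM E (N x ^ k * fderiv ℝ N x u) := by
  have hpow := hN.hasFDerivAt.pow' (k + 1)
  have htr := ((traceCLM E).hasFDerivAt.comp x hpow).const_mul (((k + 1 : ℕ) : ℝ)⁻¹)
  have hfun : traceInv N (k + 1) =
      fun y => (((k + 1 : ℕ) : ℝ)⁻¹) * (traceCLM E ∘ (N ^ (k + 1))) y := rfl
  rw [hfun, htr.fderiv]
  have hterm : ∀ i ∈ Finset.range (k + 1),
      traceCLM E (N x ^ (k - i) * fderiv ℝ N x u * N x ^ i) =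
        traceCLM E (N x ^ k * fderiv ℝ N x u) := by
    intro i hi
    have hik : i + (k - i) = k := by
      have := Finset.mem_range.mp hi
      omega
    rw [traceCLM_mul_comm, ← mul_assoc, ← pow_add, hik]
  have hsum := Finset.sum_congr rfl hterm
  have hk : ((k + 1 : ℕ) : ℝ) ≠ 0 := by positivity
  simp only [Finset.sum_const, Finset.card_range, nsmul_eq_mul] at hsum
  simp [map_sum, -Nat.cast_add] at hsum ⊢
  rw [hsum]
  field_simp

/-- The vanishing of the Nijenhuis torsion as an identity of operators,
`D_{Nu} - N D_u = S_u N - N S_u`, where `S_u v = D_v u`. -/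
lemma torsion_operator {N : E → E →L[ℝ] E} {x : E} (hN : DifferentiableAt ℝ N x) (u : E)
    (hT : ∀ v : E, nijTorsion N x u v = 0) :
    fderiv ℝ N x (N x u) - N x * fderiv ℝ N x u =
      (fderiv ℝ N x).flip u * N x - N x * (fderiv ℝ N x).flip u := by
  have hD : ∀ a b : E, fderiv ℝ (fun y => N y a) x b = fderiv ℝ N x b a := by
    intro a b
    rw [(hN.hasFDerivAt.clm_apply (hasFDerivAt_const a x)).fderiv]
    simp
  ext v
  have h := hT v
  simp only [nijTorsion, lieVF, hD, fderiv_const_apply,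
    zero_apply, zero_sub, sub_zero, map_neg, map_zero, add_zero] at h
  change fderiv ℝ N x (N x u) v - N x (fderiv ℝ N x u v) =
    fderiv ℝ N x (N x v) u - N x (fderiv ℝ N x v u)
  rw [← sub_eq_zero, ← h]
  abel

/-- Let `(M, ω, N)` be an `ωN` manifold (`ω` symplectic, `N` a
(1,1)-tensor field with vanishing Nijenhuis torsion, compatible with `ω`:
`ω♭N = N*ω♭`, i.e. `ω(Nu,v) = ω(u,Nv)`, and `Ω = ω(N·,·)` closed), and set
`I_k = (1/k) Tr(N^k)`.  Then `N* dI_k = dI_{k+1}` for all `k ≥ 1` (Lenard recursion).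
In particular, if `N = ω₂♯ ω₁♭` is the recursion operator of two Magri-compatible
symplectic forms `ω₁ = ω` and `ω₂` (i.e. `ω₂(Nu,v) = ω₁(u,v)`), then
`ω₂♯ · dI_k = ω₁♯ · dI_{k+1}`. -/
theorem lenard_recursion
    {E : Type*} [NormedAddCommGroup E] [NormedSpace ℝ E] [FiniteDimensional ℝ E]
    (U : Set E) (hU : IsOpen U)
    (ω : E → E →L[ℝ] E →L[ℝ] ℝ) (hωsm : ContDiffOn ℝ (⊤ : ℕ∞) ω U)
    (hskew : IsSkewOn ω U) (hnd : IsNondegOn ω U) (hcl : IsClosed2On ω U)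
    (N : E → E →L[ℝ] E) (hNsm : ContDiffOn ℝ (⊤ : ℕ∞) N U)
    (hNij : ∀ x ∈ U, ∀ u v : E, nijTorsion N x u v = 0)
    (hcompat : ∀ x ∈ U, ∀ u v : E, ω x (N x u) v = ω x u (N x v))
    (hΩcl : IsClosed2On (fun y => (ω y).comp (N y)) U) :
    (∀ k : ℕ, 1 ≤ k → ∀ x ∈ U, ∀ v : E,
      fderiv ℝ (traceInv N (k + 1)) x v = fderiv ℝ (traceInv N k) x (N x v)) ∧
    (∀ ω₂ : E → E →L[ℝ] E →L[ℝ] ℝ, ContDiffOn ℝ (⊤ : ℕ∞) ω₂ U → IsSkewOn ω₂ U →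
      IsNondegOn ω₂ U → IsClosed2On ω₂ U →
      (∀ x ∈ U, ∀ u v : E, ω₂ x (N x u) v = ω x u v) →
      ∀ k : ℕ, 1 ≤ k → ∀ x ∈ U, ∀ z : E,
        (∀ v : E, ω₂ x z v = fderiv ℝ (traceInv N k) x v) →
        (∀ v : E, ω x z v = fderiv ℝ (traceInv N (k + 1)) x v)) := by
  have hN : ∀ x ∈ U, DifferentiableAt ℝ N x := fun x hx =>
    (hNsm.contDiffAt (hU.mem_nhds hx)).differentiableAt (by simp)
  have hrec : ∀ k : ℕ, 1 ≤ k → ∀ x ∈ U, ∀ v : E,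
      fderiv ℝ (traceInv N (k + 1)) x v = fderiv ℝ (traceInv N k) x (N x v) := by
    intro k hk x hx v
    obtain ⟨m, rfl⟩ : ∃ m, k = m + 1 := ⟨k - 1, by omega⟩
    rw [fderiv_traceInv (hN x hx), fderiv_traceInv (hN x hx)]
    have h := congrArg (fun A => traceCLM E (N x ^ m * A))
      (torsion_operator (hN x hx) v (hNij x hx v))
    simp only [mul_sub, map_sub, ← mul_assoc, ← pow_succ] at h
    rw [traceCLM_mul_comm _ (N x), ← mul_assoc, ← pow_succ', sub_self] at h
    linarith
  refine ⟨hrec, ?_⟩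
  intro ω₂ _ hskew₂ _ _ hrel k hk x hx z hz v
  rw [hrec k hk x hx v, ← hz (N x v)]
  have h₂ : ω₂ x z (N x v) = -ω₂ x (N x v) z := by
    have h := hskew₂ x hx (z + N x v)
    simp only [map_add, add_apply, hskew₂ x hx z, hskew₂ x hx (N x v)] at h
    linarith
  have h₁ : ω x z v = -ω x v z := by
    have h := hskew x hx (z + v)
    simp only [map_add, add_apply, hskew x hx z, hskew x hx v] at h
    linarith
  rw [h₁, h₂, hrel x hx v z]
end
end

section
/- Let (M, ω₁, N) be an ωN manifold of dimension 2n. Then each regular point of M has an open neighborhood admitting coordinates (λ₁, …, λ_n, μ₁, …, μ_n), where λ₁, …, λ_n are the eigenvalues of N, such that: (1) ω₁ = Σ_i dλ_i ∧ dμ_i (Darboux coordinates for ω₁), and (2) N* dλ_i = λ_i dλ_i and N* dμ_i = λ_i dμ_i for each i (Darboux–Nijenhuis coordinates). -/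
/-!
Near a regular point, compatibility of `N` with `ω` forces every eigenspace of `N` to have even
dimension, so `N` is diagonalizable with `n` eigenplanes (`exists_eigenbasis`), and the spectral
projectors `P i` are smooth (`exists_projectors`). The eigenplanes are `ω`-orthogonal
(`IsSpectral.symm`), so `ω` is the sum of the 2-forms `σ i = ω(P i ·, ·)`.

The vanishing of the torsion of `N` has two consequences. First, `dλ_i` vanishes on all eigenplanes
but the `i`-th (`IsSpectralJet.dl_eq_zero`), whence `N^* dλ_i = λ_i dλ_i`; as the 3-form
`dλ_i ∧ σ i` lives on a plane, it is zero (`wedge_eq_zero`). Second, every eigendistribution and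
every sum of eigendistributions is integrable, so that each `σ i` is closed
(`IsSpectralJet.closed`).

A closed 2-form `σ` with `dλ ∧ σ = 0` and `dλ ≠ 0` is locally `dλ ∧ dμ` (`exists_potential`): in a
chart where `λ` is linear, `σ = dλ ∧ β` with `β` closed on the level sets of `λ`, and a Poincaré
integral along these level sets, depending smoothly on all the coordinates, yields `μ`. Applied to
every `σ i`, this gives `ω = ∑ dλ_i ∧ dμ_i`. Nondegeneracy of `ω` makes the `2n` differentials
independent, and `σ i (N v - λ_i v, ·) = 0` gives `N^* dμ_i = λ_i dμ_i`.
-/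

open Module Set
noncomputable section

variable {E : Type*} [NormedAddCommGroup E] [NormedSpace ℝ E]

universe u

/-! ### Linear algebra: eigenspaces of dimension two -/

/-- A nonzero kernel of an `ω`-symmetric endomorphism `A` has dimension at least two. The form
`ω(A u, v)` is skew with radical `ker A`; if `ker A` were a line, it would be nondegenerate on a
complement, whose dimension is odd, whereas a skew matrix of odd size is singular. -/
theorem two_le_finrank_ker {n : ℕ} {F : Type*} [AddCommGroup F] [Module ℝ F]
    [FiniteDimensional ℝ F] (ω : F →ₗ[ℝ] F →ₗ[ℝ] ℝ)
    (hdim : finrank ℝ F = 2 * n) (hskew : ∀ v, ω v v = 0)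
    (hnd : ∀ v, (∀ w, ω v w = 0) → v = 0) (A : F →ₗ[ℝ] F)
    (hA : ∀ u v, ω (A u) v = ω u (A v)) (v : F) (hv : v ≠ 0) (hAv : A v = 0) :
    2 ≤ finrank ℝ (LinearMap.ker A) := by
  by_contra hlt
  have h1 : finrank ℝ (LinearMap.ker A) = 1 := by
    have : 0 < finrank ℝ (LinearMap.ker A) :=
      Module.finrank_pos_iff_exists_ne_zero.2
        ⟨⟨v, hAv⟩, fun h => hv (congrArg Subtype.val h)⟩
    omega
  have hsw : ∀ u v, ω u v = - ω v u := by
    intro u v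
    have := hskew (u + v)
    simp [hskew] at this
    linarith
  have halt : ∀ u v, ω (A u) v = - ω (A v) u := by
    intro u v
    rw [hA, hsw]
  obtain ⟨W, hW⟩ := Submodule.exists_isCompl (LinearMap.ker A)
  have hfW : finrank ℝ W + 1 = 2 * n := by
    have := Submodule.finrank_add_eq_of_isCompl hW
    omega
  let b := finBasis ℝ W
  let M : Matrix (Fin (finrank ℝ W)) (Fin (finrank ℝ W)) ℝ :=
    Matrix.of fun i j => ω (A (b i)) (b j)
  have hM : M.transpose = - M := by
    ext i j
    simp [M, halt (b j) (b i)]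
  have hdet : M.det = 0 := by
    have h := congrArg Matrix.det hM
    rw [Matrix.det_transpose, Matrix.det_neg, Fintype.card_fin,
      Odd.neg_one_pow (by rw [Nat.odd_iff]; omega)] at h
    linarith
  obtain ⟨c, hc0, hc⟩ := Matrix.exists_vecMul_eq_zero_iff.2 hdet
  let w : W := ∑ i, c i • b i
  have hw1 : ∀ z : W, ω (A w) z = 0 := by
    intro z
    have : ∀ j, ω (A w) (b j) = 0 := by
      intro j
      have := congrFun hc j
      simpa [w, Matrix.vecMul, dotProduct, M] using this
    have hz : (ω (A w)).comp W.subtype = 0 := b.ext fun j => by simpa using this j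
    exact LinearMap.congr_fun hz z
  have hw2 : A w = 0 := by
    apply hnd
    intro z
    obtain ⟨e, he, y, hy, rfl⟩ := Submodule.mem_sup.1
      (show z ∈ LinearMap.ker A ⊔ W by rw [hW.sup_eq_top]; trivial)
    rw [map_add, hw1 ⟨y, hy⟩, hA, LinearMap.mem_ker.1 he]
    simp
  have hw3 : (w : F) = 0 := by
    have := hW.inf_eq_bot ▸ (Submodule.mem_inf.2 ⟨LinearMap.mem_ker.2 hw2, w.2⟩)
    simpa using this
  have hw4 : w = 0 := Subtype.ext hw3
  apply hc0
  have := Fintype.linearIndependent_iff.1 b.linearIndependent c hw4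
  exact funext this

/-- An `ω`-symmetric endomorphism with `n` distinct eigenvalues in dimension `2n` is diagonalizable
with two-dimensional eigenspaces. -/
theorem exists_eigenbasis {n : ℕ} {F : Type*} [AddCommGroup F] [Module ℝ F]
    [FiniteDimensional ℝ F] (ω : F →ₗ[ℝ] F →ₗ[ℝ] ℝ)
    (hdim : finrank ℝ F = 2 * n) (hskew : ∀ v, ω v v = 0)
    (hnd : ∀ v, (∀ w, ω v w = 0) → v = 0) (A : F →ₗ[ℝ] F)
    (hA : ∀ u v, ω (A u) v = ω u (A v)) (l : Fin n → ℝ) (hl : ∀ i j, i ≠ j → l i ≠ l j)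
    (hev : ∀ i, ∃ v, v ≠ 0 ∧ A v = l i • v) :
    ∃ b : Basis (Fin n × Fin 2) ℝ F, ∀ i k, A (b (i, k)) = l i • b (i, k) := by
  have hex : ∀ i, ∃ e : Fin 2 → Module.End.eigenspace A (l i), LinearIndependent ℝ e := by
    intro i
    obtain ⟨v, hv, hAv⟩ := hev i
    have := two_le_finrank_ker ω hdim hskew hnd (A - algebraMap ℝ (Module.End ℝ F) (l i))
      (by intro u v; simp [hA]) v hv (by simp [hAv])
    exact exists_linearIndependent_of_le_finrank (by rw [End.eigenspace_def]; exact this)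
  choose e he using hex
  have hli : LinearIndependent ℝ (fun p : Fin n × Fin 2 => (e p.1 p.2 : F)) := by
    rw [Fintype.linearIndependent_iff]
    intro c hc
    have hind : iSupIndep fun i => Module.End.eigenspace A (l i) :=
      (Module.End.eigenspaces_iSupIndep A).comp (f := l) (fun i j h => by
        by_contra hne; exact hl i j hne h)
    rw [Fintype.sum_prod_type] at hc
    have h0 := (iSupIndep_iff_finsetSum_eq_zero_imp_eq_zero _).1 hind Finset.univ
      (fun i => ∑ k, c (i, k) • (e i k : F))
      (fun i _ => Submodule.sum_mem _ fun k _ => Submodule.smul_mem _ _ (e i k).2) hc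
    rintro ⟨i, k⟩
    refine Fintype.linearIndependent_iff.1 (he i) (fun k => c (i, k)) ?_ k
    apply Subtype.ext
    simpa using h0 i (Finset.mem_univ i)
  refine ⟨Basis.mk hli (hli.span_eq_top_of_card_eq_finrank' (by simp [hdim, mul_comm])).ge, ?_⟩
  intro i k
  simpa using Module.End.mem_eigenspace_iff.1 (e i k).2

/-! ### Smooth spectral projectors -/

/-- `P` is the family of spectral projectors of `A` for the eigenvalues `l`: complementary
projectors summing to the identity, with `A = l i` on the range of `P i`. -/
structure IsSpectral {n : ℕ} {F : Type*} [NormedAddCommGroup F] [NormedSpace ℝ F]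
    (A : F →L[ℝ] F) (l : Fin n → ℝ) (P : Fin n → F →L[ℝ] F) : Prop where
  sum_apply : ∀ u, ∑ i, P i u = u
  self : ∀ i u, P i (P i u) = P i u
  ne : ∀ i j, i ≠ j → ∀ u, P i (P j u) = 0
  left : ∀ i u, A (P i u) = l i • P i u
  right : ∀ i u, P i (A u) = l i • P i u

/-- A smooth field `Q`, namely `∏ k ∈ s, (N - λ_k)`, acting on the eigenvectors of `N` for the
eigenvalue `c` as the scalar `∏ k ∈ s, (c - λ_k)`. -/
theorem exists_smooth_annihilator {n : ℕ} {E : Type*} [NormedAddCommGroup E] [NormedSpace ℝ E]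
    {U : Set E} {N : E → E →L[ℝ] E} (hN : ContDiffOn ℝ (⊤ : ℕ∞) N U)
    {lam : Fin n → E → ℝ} (hlam : ∀ i, ContDiffOn ℝ (⊤ : ℕ∞) (lam i) U) (s : Finset (Fin n)) :
    ∃ Q : E → E →L[ℝ] E, ContDiffOn ℝ (⊤ : ℕ∞) Q U ∧
      ∀ x ∈ U, ∀ (c : ℝ) (v : E), N x v = c • v → Q x v = (∏ k ∈ s, (c - lam k x)) • v := by
  classical
  induction s using Finset.induction_on with
  | empty => exact ⟨fun _ => ContinuousLinearMap.id ℝ E, contDiffOn_const, by simp⟩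
  | insert k s hk ih =>
    obtain ⟨Q, hQ, h⟩ := ih
    refine ⟨fun x => (N x - lam k x • ContinuousLinearMap.id ℝ E).comp (Q x),
      (hN.sub ((hlam k).smul contDiffOn_const)).clm_comp hQ, ?_⟩
    intro x hx c v hv
    simp only [ContinuousLinearMap.comp_apply, h x hx c v hv, Finset.prod_insert hk]
    simp [hv]
    module

/-- The spectral projectors are smooth, being the Lagrange interpolation polynomials
`∏ k ≠ i, (N - λ_k) / (λ_i - λ_k)`; each has a nonzero range spanned by two vectors. -/
theorem exists_projectors {n : ℕ} {E : Type*} [NormedAddCommGroup E] [NormedSpace ℝ E]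
    {U : Set E} {N : E → E →L[ℝ] E} (hN : ContDiffOn ℝ (⊤ : ℕ∞) N U)
    {lam : Fin n → E → ℝ} (hlam : ∀ i, ContDiffOn ℝ (⊤ : ℕ∞) (lam i) U)
    (hdist : ∀ x ∈ U, ∀ i j, i ≠ j → lam i x ≠ lam j x)
    (hbas : ∀ x ∈ U, ∃ b : Basis (Fin n × Fin 2) ℝ E,
      ∀ i k, N x (b (i, k)) = lam i x • b (i, k)) :
    ∃ P : Fin n → E → E →L[ℝ] E, (∀ i, ContDiffOn ℝ (⊤ : ℕ∞) (P i) U) ∧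
      (∀ x ∈ U, IsSpectral (N x) (fun i => lam i x) (fun i => P i x)) ∧
      ∀ x ∈ U, ∀ i, ∃ e : Fin 2 → E, (∀ k, P i x (e k) = e k) ∧ e 0 ≠ 0 ∧
        ∀ u, ∃ c : Fin 2 → ℝ, P i x u = c 0 • e 0 + c 1 • e 1 := by
  classical
  have hex := fun i => exists_smooth_annihilator hN hlam (Finset.univ.erase i)
  choose Q hQ hQv using hex
  have hne : ∀ i, ∀ x ∈ U, ∏ k ∈ Finset.univ.erase i, (lam i x - lam k x) ≠ 0 := by
    intro i x hx
    exact Finset.prod_ne_zero_iff.2 fun k hk =>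
      sub_ne_zero.2 (hdist x hx i k (Finset.ne_of_mem_erase hk).symm)
  let P : Fin n → E → E →L[ℝ] E := fun i x =>
    (∏ k ∈ Finset.univ.erase i, (lam i x - lam k x))⁻¹ • Q i x
  have hPe : ∀ i j, ∀ x ∈ U, ∀ v, N x v = lam j x • v → P i x v = if i = j then v else 0 := by
    intro i j x hx v hv
    simp only [P, smul_apply, hQv i x hx _ v hv]
    split_ifs with h
    · subst h
      rw [smul_smul, inv_mul_cancel₀ (hne i x hx), one_smul]
    · have h0 : ∏ k ∈ Finset.univ.erase i, (lam j x - lam k x) = 0 :=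
        Finset.prod_eq_zero (Finset.mem_erase.2 ⟨Ne.symm h, Finset.mem_univ _⟩) (sub_self _)
      rw [h0, zero_smul, smul_zero]
  refine ⟨P, ?_, ?_, ?_⟩
  · intro i
    exact ((contDiffOn_prod fun k _ => (hlam i).sub (hlam k)).inv (hne i)).smul (hQ i)
  · intro x hx
    obtain ⟨b, hb⟩ := hbas x hx
    have hPb : ∀ i j k, P i x (b (j, k)) = if i = j then b (j, k) else 0 :=
      fun i j k => hPe i j x hx _ (hb j k)
    have key : ∀ f g : E →L[ℝ] E, (∀ j k, f (b (j, k)) = g (b (j, k))) → ∀ u, f u = g u := by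
      intro f g h u
      have : (f : E →ₗ[ℝ] E) = g := b.ext fun ⟨j, k⟩ => h j k
      exact LinearMap.congr_fun this u
    constructor
    · intro u
      have := key (∑ i, P i x) (ContinuousLinearMap.id ℝ E) (by
        intro j k; simp [hPb]) u
      simpa [sum_apply] using this
    · intro i
      refine key ((P i x).comp (P i x)) (P i x) ?_
      intro j k
      simp only [ContinuousLinearMap.comp_apply, hPb]
      split_ifs with h <;> simp [hPb, h]
    · intro i i' hii
      refine key ((P i x).comp (P i' x)) 0 ?_
      intro j k
      simp only [ContinuousLinearMap.comp_apply, hPb]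
      split_ifs with h
      · simp [hPb, ← h, hii]
      · simp
    · intro i
      refine key ((N x).comp (P i x)) (lam i x • P i x) ?_
      intro j k
      simp only [ContinuousLinearMap.comp_apply, smul_apply, hPb]
      split_ifs with h <;> simp [hb, h]
    · intro i
      refine key ((P i x).comp (N x)) (lam i x • P i x) ?_
      intro j k
      simp only [ContinuousLinearMap.comp_apply, smul_apply, hb, map_smul, hPb]
      split_ifs with h <;> simp [h]
  · intro x hx i
    obtain ⟨b, hb⟩ := hbas x hx
    have hPb : ∀ i j k, P i x (b (j, k)) = if i = j then b (j, k) else 0 :=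
      fun i j k => hPe i j x hx _ (hb j k)
    refine ⟨fun k => b (i, k), fun k => by simp [hPb], b.ne_zero _, fun u => ?_⟩
    refine ⟨fun k => b.repr u (i, k), ?_⟩
    conv_lhs => rw [← b.sum_repr u, map_sum]
    simp only [map_smul, Fintype.sum_prod_type, hPb]
    simp
/-! ### Consequences of the vanishing of the Nijenhuis torsion -/

/-- The 1-jet at a point of a torsion-free field of endomorphisms together with its spectral data:
`dA`, `dl`, `dP` stand for the derivatives of `A`, `l`, `P` (the first argument being the direction
of differentiation). They satisfy the derivatives of `P i ∘ P i = P i`, `P i ∘ P j = 0` and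
`A ∘ P i = l i • P i`, and `torsion` expresses the vanishing of the Nijenhuis torsion of `A`. -/
structure IsSpectralJet {n : ℕ} {F : Type*} [NormedAddCommGroup F] [NormedSpace ℝ F]
    (A : F →L[ℝ] F) (l : Fin n → ℝ) (P : Fin n → F →L[ℝ] F)
    (dA : F →L[ℝ] F →L[ℝ] F) (dl : Fin n → F →L[ℝ] ℝ) (dP : Fin n → F →L[ℝ] F →L[ℝ] F) :
    Prop extends IsSpectral A l P where
  d_self : ∀ i a u, dP i a (P i u) + P i (dP i a u) = dP i a u
  d_ne : ∀ i j, i ≠ j → ∀ a u, dP i a (P j u) = - P i (dP j a u)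
  d_left : ∀ i a u, dA a (P i u) + A (dP i a u) = dl i a • P i u + l i • dP i a u
  torsion : ∀ u v, dA (A u) v - dA (A v) u + A (dA v u) - A (dA u v) = 0

namespace IsSpectralJet

variable {n : ℕ} {F : Type*} [NormedAddCommGroup F] [NormedSpace ℝ F]
  {A : F →L[ℝ] F} {l : Fin n → ℝ} {P : Fin n → F →L[ℝ] F}
  {dA : F →L[ℝ] F →L[ℝ] F} {dl : Fin n → F →L[ℝ] ℝ} {dP : Fin n → F →L[ℝ] F →L[ℝ] F}

/-- The `k`-th component of the vanishing torsion on eigenvectors `u`, `v` of the `i`-th and `j`-th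
eigenvalue. -/
theorem proj_torsion (h : IsSpectralJet A l P dA dl dP) (k i j : Fin n) {u v : F}
    (hu : P i u = u) (hv : P j v = v) :
    ((l k - l j) * dl i v) • P k u - ((l k - l i) * dl j u) • P k v =
      ((l k - l i) * (l k - l j)) • P k (dP i v u - dP j u v) := by
  have h1 := h.d_left i v u
  have h2 := h.d_left j u v
  have hAu := h.left i u
  have hAv := h.left j v
  rw [hu] at h1 hAu
  rw [hv] at h2 hAv
  have h3 := congrArg (P k) (h.torsion u v)
  rw [hAu, hAv] at h3
  have h1' := congrArg (P k) h1
  have h2' := congrArg (P k) h2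
  simp only [map_add, map_sub, map_smul, smul_apply, h.right, map_zero] at h1' h2' h3 ⊢
  have e1 : P k (dA v u) = dl i v • P k u + (l i - l k) • P k (dP i v u) := by
    rw [sub_smul, ← add_sub_assoc, ← h1']; abel
  have e2 : P k (dA u v) = dl j u • P k v + (l j - l k) • P k (dP j u v) := by
    rw [sub_smul, ← add_sub_assoc, ← h2']; abel
  rw [e1, e2] at h3
  rw [← sub_eq_zero, ← h3]
  module

/-- `dλ_i` vanishes on the other eigenspaces. -/
theorem dl_eq_zero (h : IsSpectralJet A l P dA dl dP) (hl : ∀ i j, i ≠ j → l i ≠ l j)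
    (hP : ∀ i, ∃ u, P i u = u ∧ u ≠ 0) {i j : Fin n} (hij : i ≠ j) (v : F) :
    dl i (P j v) = 0 := by
  obtain ⟨u, hu, hu0⟩ := hP i
  have := h.proj_torsion i i j hu (h.self j v)
  rw [hu, sub_self, zero_mul, zero_mul, zero_smul, zero_smul, sub_zero] at this
  simpa [hu0, sub_ne_zero.2 (hl i j hij)] using this

theorem dl_comp (h : IsSpectralJet A l P dA dl dP) (hl : ∀ i j, i ≠ j → l i ≠ l j)
    (hP : ∀ i, ∃ u, P i u = u ∧ u ≠ 0) (i : Fin n) (v : F) :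
    dl i (P i v) = dl i v := by
  conv_rhs => rw [← h.sum_apply v, map_sum]
  rw [Finset.sum_eq_single i (fun j _ hj => h.dl_eq_zero hl hP hj.symm v) (by simp)]

/-- The bracket of sections of the `i`-th and `j`-th eigendistributions has no component in a third
one. -/
theorem proj_bracket (h : IsSpectralJet A l P dA dl dP) (hl : ∀ i j, i ≠ j → l i ≠ l j)
    {k i j : Fin n} (hki : k ≠ i) (hkj : k ≠ j) {u v : F}
    (hu : P i u = u) (hv : P j v = v) : P k (dP i v u - dP j u v) = 0 := by
  have := h.proj_torsion k i j hu hv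
  rw [← hu, ← hv, h.ne k i hki, h.ne k j hkj, hu, hv, smul_zero, smul_zero, sub_zero] at this
  have h2 := smul_eq_zero.1 this.symm
  exact h2.resolve_left
    (mul_ne_zero (sub_ne_zero.2 (hl k i hki)) (sub_ne_zero.2 (hl k j hkj)))

/-- Integrability of the distribution `ker P k`, the sum of the other eigendistributions. -/
theorem ker_integrable (h : IsSpectralJet A l P dA dl dP) (hl : ∀ i j, i ≠ j → l i ≠ l j)
    (k : Fin n) {u v : F} (hu : P k u = 0) (hv : P k v = 0) :
    P k (dP k v u) = P k (dP k u v) := by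
  have key : ∀ i j, P k (dP k (P j v) (P i u)) = P k (dP k (P i u) (P j v)) := by
    intro i j
    by_cases hi : k = i
    · subst hi; simp [hu]
    by_cases hj : k = j
    · subst hj; simp [hv]
    have := h.proj_bracket hl hi hj (h.self i u) (h.self j v)
    rw [h.d_ne k i hi, h.d_ne k j hj, map_neg, map_neg, h.self, h.self]
    rw [map_sub, sub_eq_zero] at this
    have e1 : P k (dP i (P j v) (P i u)) = P k (dP i (P j v) u) := by
      have := congrArg (P k) (h.d_self i (P j v) u)
      rwa [map_add, h.ne k i hi, add_zero] at this
    have e2 : P k (dP j (P i u) (P j v)) = P k (dP j (P i u) v) := by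
      have := congrArg (P k) (h.d_self j (P i u) v)
      rwa [map_add, h.ne k j hj, add_zero] at this
    rw [← e1, ← e2, this]
  have e : ∀ x y : F, P k (dP k x y) = ∑ i, ∑ j, P k (dP k (P i x) (P j y)) := by
    intro x y
    conv_lhs => rw [← h.sum_apply x, ← h.sum_apply y]
    simp only [map_sum, _root_.sum_apply]
    rw [Finset.sum_comm]
  rw [e v u, e u v, Finset.sum_comm]
  exact Finset.sum_congr rfl fun i _ => Finset.sum_congr rfl fun j _ => key i j

theorem proj_dP_range (h : IsSpectralJet A l P dA dl dP) (k : Fin n) {u : F} (hu : P k u = u)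
    (a : F) : P k (dP k a u) = 0 := by
  have := h.d_self k a u
  rw [hu] at this
  simpa using this

theorem proj_dP_ker (h : IsSpectralJet A l P dA dl dP) (k : Fin n) {u : F} (hu : P k u = 0)
    (a : F) : P k (dP k a u) = dP k a u := by
  have := h.d_self k a u
  rw [hu] at this
  simpa using this

/-- Integrability of the `k`-th eigendistribution. -/
theorem range_integrable (h : IsSpectralJet A l P dA dl dP) (hl : ∀ i j, i ≠ j → l i ≠ l j)
    (k : Fin n) {u v : F} (hu : P k u = u) (hv : P k v = v) :
    dP k v u = dP k u v := by
  rw [← sub_eq_zero, ← h.sum_apply (dP k v u - dP k u v)]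
  refine Finset.sum_eq_zero fun m _ => ?_
  by_cases hm : m = k
  · subst hm
    rw [map_sub, h.proj_dP_range m hu, h.proj_dP_range m hv, sub_zero]
  · exact h.proj_bracket hl hm hm hu hv

/-- If `ω` is closed, so is its component `σ = ω(P k ·, ·)`. Splitting each argument into its parts
in the range and in the kernel of `P k`, two of the three parts are of the same kind; integrability
of the range, respectively of the kernel, then yields the claim. -/
theorem closed (h : IsSpectralJet A l P dA dl dP) (hl : ∀ i j, i ≠ j → l i ≠ l j)
    {ω : F →L[ℝ] F →L[ℝ] ℝ} {dω : F →L[ℝ] F →L[ℝ] F →L[ℝ] ℝ} (k : Fin n)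
    (hsymm : ∀ u v, ω (P k u) v = ω u (P k v))
    (hcl : ∀ u v w, dω u v w - dω v u w + dω w u v = 0)
    {dσ : F →L[ℝ] F →L[ℝ] F →L[ℝ] ℝ} (hdσ : ∀ a u v, dσ a u v = dω a (P k u) v + ω (dP k a u) v)
    (hskew : ∀ a u v, dσ a u v = - dσ a v u) (u v w : F) :
    dσ u v w - dσ v u w + dσ w u v = 0 := by
  have hker : ∀ u v w, P k u = 0 → P k v = 0 → dσ u v w - dσ v u w + dσ w u v = 0 := by
    intro u v w hu hv
    have e1 : ω (dP k w u) v = 0 := by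
      rw [← h.proj_dP_ker k hu, hsymm, hv, map_zero]
    rw [hdσ, hdσ, hdσ, hu, hv, e1, ← h.proj_dP_ker k hv u, ← h.proj_dP_ker k hu v,
      h.ker_integrable hl k hu hv]
    simp
  have hran : ∀ u v w, P k u = u → P k v = v → dσ u v w - dσ v u w + dσ w u v = 0 := by
    intro u v w hu hv
    have e1 : ω (dP k w u) v = 0 := by
      rw [← hv, ← hsymm, h.proj_dP_range k hu, map_zero, zero_apply]
    rw [hdσ, hdσ, hdσ, hu, hv, e1, h.range_integrable hl k hu hv]
    linarith [hcl u v w]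
  have hsplit : ∀ u, ∃ r s, u = r + s ∧ P k r = r ∧ P k s = 0 := fun u =>
    ⟨P k u, u - P k u, by abel, h.self k u, by rw [map_sub, h.self, sub_self]⟩
  obtain ⟨u1, u0, rfl, hu1, hu0⟩ := hsplit u
  obtain ⟨v1, v0, rfl, hv1, hv0⟩ := hsplit v
  obtain ⟨w1, w0, rfl, hw1, hw0⟩ := hsplit w
  have a1 := hran u1 v1 w1 hu1 hv1
  have a2 := hran u1 v1 w0 hu1 hv1
  have a3 := hran u1 w1 v0 hu1 hw1
  have a4 := hran v1 w1 u0 hv1 hw1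
  have b1 := hker u0 v0 w0 hu0 hv0
  have b2 := hker u0 v0 w1 hu0 hv0
  have b3 := hker u0 w0 v1 hu0 hw0
  have b4 := hker v0 w0 u1 hv0 hw0
  simp only [map_add, add_apply]
  linarith [hskew u0 v1 w1, hskew u1 v0 w1, hskew u1 v1 w0, hskew u1 v0 w0, hskew u0 v1 w0,
    hskew u0 v0 w1, hskew v0 u1 w1, hskew v1 u0 w1, hskew v1 u1 w0, hskew v1 u0 w0,
    hskew v0 u1 w0, hskew v0 u0 w1, hskew w0 u1 v1, hskew w1 u0 v1, hskew w1 u1 v0,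
    hskew w1 u0 v0, hskew w0 u1 v0, hskew w0 u0 v1]

end IsSpectralJet


/-! ### Smoothness of integrals depending on a parameter -/

theorem continuousOn_slice {E H : Type*} [NormedAddCommGroup E] [NormedAddCommGroup H]
    {V : Set E} {T : Set ℝ} (hT01 : Icc 0 1 ⊆ T) {g : E × ℝ → H} (hg : ContinuousOn g (V ×ˢ T))
    {x : E} (hx : x ∈ V) : ContinuousOn (fun s => g (x, s)) (Icc 0 1) :=
  hg.comp (by fun_prop) fun _ hs => ⟨hx, hT01 hs⟩

theorem aestronglyMeasurable_slice {E H : Type*} [NormedAddCommGroup E] [NormedAddCommGroup H]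
    {V : Set E} {T : Set ℝ} (hT01 : Icc 0 1 ⊆ T) {g : E × ℝ → H} (hg : ContinuousOn g (V ×ˢ T))
    {x : E} (hx : x ∈ V) : MeasureTheory.AEStronglyMeasurable (fun s => g (x, s))
      (MeasureTheory.volume.restrict (uIoc (0:ℝ) 1)) := by
  refine ((continuousOn_slice hT01 hg hx).mono ?_).aestronglyMeasurable measurableSet_uIoc
  rw [uIoc_of_le zero_le_one]
  exact Ioc_subset_Icc_self

theorem hasFDerivAt_integral_param {E G : Type*} [NormedAddCommGroup E] [NormedSpace ℝ E]
    [FiniteDimensional ℝ E] [NormedAddCommGroup G] [NormedSpace ℝ G]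
    {V : Set E} {T : Set ℝ} (hV : IsOpen V) (hT : IsOpen T) (hT01 : Icc 0 1 ⊆ T)
    {f : E × ℝ → G} (hf : ContDiffOn ℝ (⊤ : ℕ∞) f (V ×ˢ T)) {y : E} (hy : y ∈ V) :
    HasFDerivAt (fun y => ∫ s in (0:ℝ)..1, f (y, s))
      (∫ s in (0:ℝ)..1, (fderiv ℝ f (y, s)).comp (ContinuousLinearMap.inl ℝ E ℝ)) y := by
  have hVT : IsOpen (V ×ˢ T) := hV.prod hT
  have hfc := hf.continuousOn
  have hf'c : ContinuousOn (fun z => (fderiv ℝ f z).comp (ContinuousLinearMap.inl ℝ E ℝ))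
      (V ×ˢ T) :=
    (hf.continuousOn_fderiv_of_isOpen hVT (by simp)).clm_comp continuousOn_const
  obtain ⟨r, hr, hrV⟩ := Metric.nhds_basis_closedBall.mem_iff.1 (hV.mem_nhds hy)
  have hcomp : IsCompact (Metric.closedBall y r ×ˢ Icc (0:ℝ) 1) :=
    (isCompact_closedBall y r).prod isCompact_Icc
  obtain ⟨C, hC⟩ := hcomp.exists_bound_of_continuousOn (hf'c.mono (prod_mono hrV hT01))
  have hI : uIoc (0:ℝ) 1 ⊆ Icc 0 1 := by
    rw [uIoc_of_le zero_le_one]; exact Ioc_subset_Icc_self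
  refine intervalIntegral.hasFDerivAt_integral_of_dominated_of_fderiv_le
    (s := Metric.ball y r) (bound := fun _ => C)
    (F' := fun x s => (fderiv ℝ f (x, s)).comp (ContinuousLinearMap.inl ℝ E ℝ))
    (Metric.ball_mem_nhds y hr) ?_ ?_ ?_ ?_ ?_ ?_
  · filter_upwards [hV.mem_nhds hy] with x hx
    exact aestronglyMeasurable_slice hT01 hfc hx
  · exact ContinuousOn.intervalIntegrable_of_Icc zero_le_one (continuousOn_slice hT01 hfc hy)
  · exact aestronglyMeasurable_slice hT01 hf'c hy
  · refine Filter.Eventually.of_forall fun t ht x hx => ?_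
    exact hC (x, t) ⟨Metric.ball_subset_closedBall hx, hI ht⟩
  · exact intervalIntegrable_const
  · refine Filter.Eventually.of_forall fun t ht x hx => ?_
    have hd : DifferentiableAt ℝ f (x, t) :=
      (hf.differentiableOn (by simp)).differentiableAt
        (hVT.mem_nhds ⟨hrV (Metric.ball_subset_closedBall hx), hT01 (hI ht)⟩)
    exact hd.hasFDerivAt.comp x (hasFDerivAt_prodMk_left x t)

/-- The induction differentiates under the integral sign, which changes the target `G` to
`E →L[ℝ] G`; hence the quantification over `G`, in the universe of `E`. -/
theorem contDiffOn_integral_param_nat {E : Type u} [NormedAddCommGroup E] [NormedSpace ℝ E]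
    [FiniteDimensional ℝ E]
    {V : Set E} {T : Set ℝ} (hV : IsOpen V) (hT : IsOpen T) (hT01 : Icc 0 1 ⊆ T) (m : ℕ) :
    ∀ {G : Type u} [NormedAddCommGroup G] [NormedSpace ℝ G]
      {f : E × ℝ → G} (_ : ContDiffOn ℝ (⊤ : ℕ∞) f (V ×ˢ T)),
    ContDiffOn ℝ m (fun y => ∫ s in (0:ℝ)..1, f (y, s)) V := by
  induction m with
  | zero =>
    intro G _ _ f hf
    exact contDiffOn_zero.2 fun y hy =>
      (hasFDerivAt_integral_param hV hT hT01 hf hy).continuousAt.continuousWithinAt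
  | succ m ih =>
    intro G _ _ f hf
    have hd := fun y (hy : y ∈ V) => hasFDerivAt_integral_param hV hT hT01 hf hy
    push_cast
    refine (contDiffOn_succ_iff_fderiv_of_isOpen hV).2 ⟨fun y hy =>
      (hd y hy).differentiableAt.differentiableWithinAt, by simp, ?_⟩
    refine (ih (f := fun z => (fderiv ℝ f z).comp (ContinuousLinearMap.inl ℝ E ℝ)) ?_).congr
      fun y hy => (hd y hy).fderiv
    exact (hf.fderiv_of_isOpen (hV.prod hT) (by simp)).clm_comp contDiffOn_const

theorem contDiffOn_integral_param {E : Type*} [NormedAddCommGroup E] [NormedSpace ℝ E]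
    [FiniteDimensional ℝ E]
    {V : Set E} {T : Set ℝ} (hV : IsOpen V) (hT : IsOpen T) (hT01 : Icc 0 1 ⊆ T)
    {f : E × ℝ → ℝ} (hf : ContDiffOn ℝ (⊤ : ℕ∞) f (V ×ˢ T)) :
    ContDiffOn ℝ (⊤ : ℕ∞) (fun y => ∫ s in (0:ℝ)..1, f (y, s)) V := by
  have hd := fun y (hy : y ∈ V) => hasFDerivAt_integral_param hV hT hT01 hf hy
  refine (contDiffOn_infty_iff_fderiv_of_isOpen hV).2 ⟨fun y hy =>
      (hd y hy).differentiableAt.differentiableWithinAt, ?_⟩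
  refine contDiffOn_infty.2 fun m => ?_
  refine (contDiffOn_integral_param_nat hV hT hT01 m
    (f := fun z => (fderiv ℝ f z).comp (ContinuousLinearMap.inl ℝ E ℝ)) ?_).congr
      fun y hy => (hd y hy).fderiv
  exact (hf.fderiv_of_isOpen (hV.prod hT) (by simp)).clm_comp contDiffOn_const

/-! ### A potential along the level sets of a linear form -/

/-- The derivative along the leaf direction `u` of the integrand `x ↦ β (γ x s) (π (x - q))`, where
`γ x s = x - (1 - s) • π (x - q)` is the segment from `q + (1 - π) (x - q)` to `x`, equals
`d/ds (s * β (γ x s) u)`: this is where closedness of `β` along the leaf (`hsym`) enters the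
Poincaré lemma. -/
theorem leaf_hasDerivAt {E : Type*} [NormedAddCommGroup E] [NormedSpace ℝ E]
    {β : E → E →L[ℝ] ℝ} {π : E →L[ℝ] E} {q y u : E} {s : ℝ}
    (hβ : DifferentiableAt ℝ β (y - (1 - s) • π (y - q))) (hu : π u = u)
    (hsym : fderiv ℝ β (y - (1 - s) • π (y - q)) u (π (y - q)) =
      fderiv ℝ β (y - (1 - s) • π (y - q)) (π (y - q)) u)
    {L : E →L[ℝ] ℝ}
    (hL : HasFDerivAt (fun x => β (x - (1 - s) • π (x - q)) (π (x - q))) L y) :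
    HasDerivAt (fun t => t * β (y - (1 - t) • π (y - q)) u) (L u) s := by
  have hβγ := hβ.hasFDerivAt
  have hπd : HasFDerivAt (fun x => π (x - q)) π y :=
    HasFDerivAt.comp (g := π) (f := fun x => x - q) y π.hasFDerivAt
      ((hasFDerivAt_id y).sub_const q)
  have h2 : HasFDerivAt (fun x => x - (1 - s) • π (x - q))
      (ContinuousLinearMap.id ℝ E - (1 - s) • π) y :=
    (hasFDerivAt_id y).sub (hπd.const_smul (1 - s))
  have h3 := (HasFDerivAt.comp (g := β) (f := fun x => x - (1 - s) • π (x - q)) y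
    hβγ h2).clm_apply hπd
  have h4 := congrArg (fun L => L u) (hL.unique h3)
  have h5 : HasDerivAt (fun t => y - (1 - t) • π (y - q)) (π (y - q)) s := by
    have := (((hasDerivAt_id' s).const_sub 1).smul_const (π (y - q))).const_sub y
    rwa [neg_one_smul, neg_neg] at this
  have h6 := (hasDerivAt_id' s).mul
    ((HasFDerivAt.comp_hasDerivAt (l := β) (f := fun t => y - (1 - t) • π (y - q)) s
      hβγ h5).clm_apply (hasDerivAt_const s u))
  refine h6.congr_deriv ?_
  have h9 : L u = s * fderiv ℝ β (y - (1 - s) • π (y - q)) u (π (y - q))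
      + β (y - (1 - s) • π (y - q)) u := by
    rw [h4]
    simp [-map_sub, hu]
    ring
  rw [h9, hsym]
  simp [-map_sub]
  ring

/-- A closed 2-form `σ` with `ℓ ∧ σ = 0`, for a nonzero constant covector `ℓ`, is locally `ℓ ∧ dμ`.
With `ℓ Y = 1` one has `σ = ℓ ∧ β` for `β = σ(Y, ·)`, and `dσ = 0` makes `β` closed on each
hyperplane `ℓ = const`. The Poincaré integral of `β` along these hyperplanes, based on the line
`q + ℝ Y` transverse to them, is a potential `μ` with `dμ = β` modulo `ℓ`. -/
theorem exists_leaf_potential {E : Type*} [NormedAddCommGroup E] [NormedSpace ℝ E]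
    [FiniteDimensional ℝ E] {W : Set E} (hW : IsOpen W) {q : E} (hq : q ∈ W)
    {σ : E → E →L[ℝ] E →L[ℝ] ℝ} (hσ : ContDiffOn ℝ (⊤ : ℕ∞) σ W)
    (hcl : ∀ x ∈ W, ∀ u v w,
      fderiv ℝ σ x u v w - fderiv ℝ σ x v u w + fderiv ℝ σ x w u v = 0)
    (ℓ : E →L[ℝ] ℝ) (Y : E) (hY : ℓ Y = 1)
    (hwedge : ∀ x ∈ W, ∀ a b c, ℓ a * σ x b c - ℓ b * σ x a c + ℓ c * σ x a b = 0) :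
    ∃ W' ⊆ W, IsOpen W' ∧ q ∈ W' ∧ ∃ μ : E → ℝ, ContDiffOn ℝ (⊤ : ℕ∞) μ W' ∧
      ∀ x ∈ W', ∀ u v, σ x u v = ℓ u * fderiv ℝ μ x v - ℓ v * fderiv ℝ μ x u := by
  set π : E →L[ℝ] E := ContinuousLinearMap.id ℝ E - ℓ.smulRight Y with hπ
  have hπa : ∀ u, π u = u - ℓ u • Y := fun u => by simp [hπ]
  have hℓπ : ∀ u, ℓ (π u) = 0 := fun u => by simp [hπa, hY]
  set β : E → E →L[ℝ] ℝ := fun y => σ y Y with hβ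
  have hβsm : ContDiffOn ℝ (⊤ : ℕ∞) β W := hσ.clm_apply contDiffOn_const
  have hσβ : ∀ x ∈ W, ∀ u v, σ x u v = ℓ u * β x v - ℓ v * β x u := by
    intro x hx u v
    have := hwedge x hx Y u v
    rw [hY] at this
    simp only [hβ]
    linarith
  have hσd : ∀ x ∈ W, DifferentiableAt ℝ σ x := fun x hx =>
    (hσ.differentiableOn (by simp)).differentiableAt (hW.mem_nhds hx)
  have hβd : ∀ x ∈ W, DifferentiableAt ℝ β x := fun x hx =>
    (hβsm.differentiableOn (by simp)).differentiableAt (hW.mem_nhds hx)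
  have hdβ : ∀ x ∈ W, ∀ a b, fderiv ℝ β x a b = fderiv ℝ σ x a Y b := by
    intro x hx a b
    have := ((hσd x hx).hasFDerivAt.clm_apply (hasFDerivAt_const Y x)).fderiv
    simp only [hβ]
    rw [this]
    simp
  -- `β` is closed along the hyperplanes `ℓ = const`
  have hsym : ∀ x ∈ W, ∀ u v, ℓ u = 0 → ℓ v = 0 → fderiv ℝ β x u v = fderiv ℝ β x v u := by
    intro x hx u v hu hv
    have h0 : fderiv ℝ σ x Y u v = 0 := by
      have h1 : (fun y => σ y u v) =ᶠ[nhds x] fun _ => 0 := by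
        filter_upwards [hW.mem_nhds hx] with y hy
        rw [hσβ y hy, hu, hv]; ring
      have h2 := (((hσd x hx).hasFDerivAt.clm_apply (hasFDerivAt_const u x)).clm_apply
        (hasFDerivAt_const v x)).fderiv
      rw [h1.fderiv_eq] at h2
      have := congrArg (fun L => L Y) h2
      simpa using this.symm
    have := hcl x hx Y u v
    rw [hdβ x hx, hdβ x hx]
    linarith
  -- the radius is chosen so that the segments `γ`, extended to `s ∈ (-1, 2)`, stay in `W`
  obtain ⟨R, hR, hRW⟩ := Metric.isOpen_iff.1 hW q hq
  have hpos : 0 < 1 + 2 * ‖π‖ := by positivity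
  set r := R / (1 + 2 * ‖π‖) with hr
  have hr0 : 0 < r := by positivity
  set V := Metric.ball q r with hV
  set T : Set ℝ := Ioo (-1) 2 with hT
  have hT01 : Icc (0:ℝ) 1 ⊆ T := fun s hs => ⟨by linarith [hs.1], by linarith [hs.2]⟩
  set γ : E × ℝ → E := fun z => z.1 - (1 - z.2) • π (z.1 - q) with hγ
  have hγW : ∀ z ∈ V ×ˢ T, γ z ∈ W := by
    rintro ⟨y, s⟩ ⟨hy, hs⟩
    apply hRW
    simp only [hV, Metric.mem_ball, dist_eq_norm] at hy ⊢
    have h1 : ‖(1 - s) • π (y - q)‖ ≤ 2 * (‖π‖ * ‖y - q‖) := by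
      rw [norm_smul]
      refine mul_le_mul ?_ (π.le_opNorm _) (norm_nonneg _) (by norm_num)
      rw [Real.norm_eq_abs, abs_le]
      exact ⟨by linarith [hs.2], by linarith [hs.1]⟩
    have h2 : ‖γ (y, s) - q‖ ≤ ‖y - q‖ + ‖(1 - s) • π (y - q)‖ := by
      have : γ (y, s) - q = (y - q) - (1 - s) • π (y - q) := by simp only [hγ]; abel
      rw [this]; exact norm_sub_le _ _
    calc ‖γ (y, s) - q‖ ≤ (1 + 2 * ‖π‖) * ‖y - q‖ := by linarith
      _ < (1 + 2 * ‖π‖) * r := by gcongr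
      _ = R := by rw [hr]; field_simp
  have hγsm : ContDiff ℝ (⊤ : ℕ∞) γ := by
    simp only [hγ]; fun_prop
  set f : E × ℝ → ℝ := fun z => β (γ z) (π (z.1 - q)) with hf
  have hfsm : ContDiffOn ℝ (⊤ : ℕ∞) f (V ×ˢ T) := by
    refine (hβsm.comp hγsm.contDiffOn hγW).clm_apply (ContDiff.contDiffOn ?_)
    fun_prop
  have hVo : IsOpen V := Metric.isOpen_ball
  have hTo : IsOpen T := isOpen_Ioo
  have hVW : V ⊆ W := by
    intro y hy
    have := hγW (y, 1) ⟨hy, hT01 (by simp)⟩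
    simpa [hγ] using this
  -- the derivative of the potential along the leaf is `β`
  have hμ : ∀ y ∈ V, ∀ u, ℓ u = 0 →
      fderiv ℝ (fun y => ∫ s in (0:ℝ)..1, f (y, s)) y u = β y u := by
    intro y hy u hu
    have hπu : π u = u := by rw [hπa, hu, zero_smul, sub_zero]
    rw [(hasFDerivAt_integral_param hVo hTo hT01 hfsm hy).fderiv]
    have hcont : ContinuousOn
        (fun z => (fderiv ℝ f z).comp (ContinuousLinearMap.inl ℝ E ℝ)) (V ×ˢ T) :=
      (hfsm.continuousOn_fderiv_of_isOpen (hVo.prod hTo) (by simp)).clm_comp continuousOn_const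
    have hcont' := continuousOn_slice hT01 hcont hy
    rw [ContinuousLinearMap.intervalIntegral_apply
      (hcont'.intervalIntegrable_of_Icc zero_le_one)]
    have hderiv : ∀ s ∈ uIcc (0:ℝ) 1, HasDerivAt (fun s => s * β (γ (y, s)) u)
        (((fderiv ℝ f (y, s)).comp (ContinuousLinearMap.inl ℝ E ℝ)) u) s := by
      intro s hs
      rw [uIcc_of_le zero_le_one] at hs
      have hys : (y, s) ∈ V ×ˢ T := ⟨hy, hT01 hs⟩
      have hfd : HasFDerivAt f (fderiv ℝ f (y, s)) (y, s) :=
        ((hfsm.differentiableOn (by simp)).differentiableAt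
          ((hVo.prod hTo).mem_nhds hys)).hasFDerivAt
      exact leaf_hasDerivAt (hβd _ (hγW _ hys)) hπu
        (hsym _ (hγW _ hys) u (π (y - q)) hu (hℓπ _))
        (HasFDerivAt.comp (g := f) (f := fun x => (x, s)) y hfd (hasFDerivAt_prodMk_left y s))
    rw [intervalIntegral.integral_eq_sub_of_hasDerivAt hderiv
      ((hcont'.clm_apply continuousOn_const).intervalIntegrable_of_Icc zero_le_one)]
    simp [hγ]
  refine ⟨V, hVW, hVo, Metric.mem_ball_self hr0, fun y => ∫ s in (0:ℝ)..1, f (y, s),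
    contDiffOn_integral_param hVo hTo hT01 hfsm, ?_⟩
  intro x hx u v
  set M := fderiv ℝ (fun y => ∫ s in (0:ℝ)..1, f (y, s)) x with hM
  -- `dμ` differs from `β` by a multiple of `ℓ`, which the wedge product with `ℓ` removes
  have hMπ : ∀ u, M u = β x u + ℓ u * (M Y - β x Y) := by
    intro u
    have h1 := hμ x hx (π u) (hℓπ u)
    rw [← hM] at h1
    simp only [hπa, map_sub, map_smul, smul_eq_mul] at h1
    linarith
  rw [hσβ x (hVW hx), hMπ u, hMπ v]
  ring

/-! ### Straightening a function, and the potential in general position -/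

/-- The pullback `τ = ψ^* σ` of a closed 2-form is closed: the terms with second derivatives of
`ψ` cancel by symmetry. -/
theorem pullback_closed {E : Type*} [NormedAddCommGroup E] [NormedSpace ℝ E]
    {σ : E → E →L[ℝ] E →L[ℝ] ℝ} {ψ : E → E} {y : E}
    (hσ : DifferentiableAt ℝ σ (ψ y)) (hψ : ContDiffAt ℝ (⊤ : ℕ∞) ψ y)
    (hskew : ∀ v, σ (ψ y) v v = 0)
    (hcl : ∀ u v w, fderiv ℝ σ (ψ y) u v w - fderiv ℝ σ (ψ y) v u w + fderiv ℝ σ (ψ y) w u v = 0)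
    (u v w : E) :
    let τ : E → E →L[ℝ] E →L[ℝ] ℝ := fun z => (σ (ψ z)).bilinearComp (fderiv ℝ ψ z) (fderiv ℝ ψ z)
    fderiv ℝ τ y u v w - fderiv ℝ τ y v u w + fderiv ℝ τ y w u v = 0 := by
  intro τ
  have hsw : ∀ a b, σ (ψ y) a b = - σ (ψ y) b a := by
    intro a b
    have := hskew (a + b)
    simp [hskew] at this
    linarith
  have hψ1 : DifferentiableAt ℝ ψ y := hψ.differentiableAt (by simp)
  have hψ2 : DifferentiableAt ℝ (fderiv ℝ ψ) y :=
    (hψ.fderiv_right (m := (⊤ : ℕ∞)) (by simp)).differentiableAt (by simp)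
  have hsymm := hψ.isSymmSndFDerivAt
    (by rw [minSmoothness_of_isRCLikeNormedField]; exact WithTop.coe_le_coe.2 le_top)
  have hσψ : HasFDerivAt (fun z => σ (ψ z)) ((fderiv ℝ σ (ψ y)).comp (fderiv ℝ ψ y)) y :=
    HasFDerivAt.comp (g := σ) (f := ψ) y hσ.hasFDerivAt hψ1.hasFDerivAt
  have hτd : DifferentiableAt ℝ τ y := by
    have : τ = fun z => ((ContinuousLinearMap.compL ℝ E E ℝ).flip (fderiv ℝ ψ z)).comp
        ((σ (ψ z)).comp (fderiv ℝ ψ z)) := by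
      ext z a b; simp [τ]
    rw [this]
    exact ((ContinuousLinearMap.differentiableAt _).comp y hψ2).clm_comp
      (hσψ.differentiableAt.clm_comp hψ2)
  have key : ∀ a b c, fderiv ℝ τ y a b c =
      fderiv ℝ σ (ψ y) (fderiv ℝ ψ y a) (fderiv ℝ ψ y b) (fderiv ℝ ψ y c)
      + σ (ψ y) (fderiv ℝ (fderiv ℝ ψ) y a b) (fderiv ℝ ψ y c)
      + σ (ψ y) (fderiv ℝ ψ y b) (fderiv ℝ (fderiv ℝ ψ) y a c) := by
    intro a b c
    have h1 := (hτd.hasFDerivAt.clm_apply (hasFDerivAt_const b y)).clm_apply (hasFDerivAt_const c y)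
    have h2 := (hσψ.clm_apply (hψ2.hasFDerivAt.clm_apply (hasFDerivAt_const b y))).clm_apply
      (hψ2.hasFDerivAt.clm_apply (hasFDerivAt_const c y))
    have h3 := congrArg (fun L => L a) (h1.unique h2)
    simp at h3
    rw [h3]; ring
  rw [key, key, key]
  have s1 := hsymm.eq u v
  have s2 := hsymm.eq u w
  have s3 := hsymm.eq v w
  rw [s1, s2, s3]
  linarith [hcl (fderiv ℝ ψ y u) (fderiv ℝ ψ y v) (fderiv ℝ ψ y w),
    hsw (fderiv ℝ ψ y v) (fderiv ℝ (fderiv ℝ ψ) y w u),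
    hsw (fderiv ℝ ψ y u) (fderiv ℝ (fderiv ℝ ψ) y w v)]

/-- A function with nonzero differential at `p` becomes a linear form `ℓ` in a suitable chart `φ`
around `p`, namely `φ x = x + (l x - ℓ x) • Y` with `ℓ = dl(p)` and `ℓ Y = 1`. -/
theorem exists_straightening {E : Type*} [NormedAddCommGroup E] [NormedSpace ℝ E]
    [FiniteDimensional ℝ E] {V : Set E} (hV : IsOpen V) {p : E} (hp : p ∈ V)
    {l : E → ℝ} (hl : ContDiffOn ℝ (⊤ : ℕ∞) l V) (hdl : fderiv ℝ l p ≠ 0) :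
    ∃ (φ : OpenPartialHomeomorph E E) (ℓ : E →L[ℝ] ℝ) (Y : E), ℓ Y = 1 ∧ p ∈ φ.source ∧
      φ.source ⊆ V ∧ ContDiffOn ℝ (⊤ : ℕ∞) φ φ.source ∧ ContDiffOn ℝ (⊤ : ℕ∞) φ.symm φ.target ∧
      ∀ x, ℓ (φ x) = l x := by
  obtain ⟨Y0, hY0⟩ : ∃ Y0, fderiv ℝ l p Y0 ≠ 0 := by
    by_contra! h
    exact hdl (ContinuousLinearMap.ext h)
  set ℓ := fderiv ℝ l p with hℓ
  set Y : E := (ℓ Y0)⁻¹ • Y0 with hYdef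
  have hY : ℓ Y = 1 := by simp [hYdef, hY0]
  set g : E → E := fun x => x + (l x - ℓ x) • Y with hg
  have hgsm : ContDiffOn ℝ (⊤ : ℕ∞) g V :=
    contDiffOn_id.add ((hl.sub ℓ.contDiff.contDiffOn).smul contDiffOn_const)
  have hgat : ∀ x ∈ V, ContDiffAt ℝ (⊤ : ℕ∞) g x := fun x hx => hgsm.contDiffAt (hV.mem_nhds hx)
  have hld : DifferentiableAt ℝ l p :=
    (hl.differentiableOn (by simp)).differentiableAt (hV.mem_nhds hp)
  have hg' : HasFDerivAt g ((ContinuousLinearEquiv.refl ℝ E : E ≃L[ℝ] E) : E →L[ℝ] E) p := by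
    have := (hasFDerivAt_id p).add
      ((hld.hasFDerivAt.sub ℓ.hasFDerivAt).smul (hasFDerivAt_const Y p))
    refine this.congr_fderiv ?_
    ext v
    simp [hℓ]
  -- shrinking the domain to where `dg` is invertible makes the inverse smooth everywhere
  have hinv : ∀ᶠ x in nhds p, fderiv ℝ g x ∈ range ((↑) : (E ≃L[ℝ] E) → E →L[ℝ] E) := by
    have hc : ContinuousAt (fderiv ℝ g) p :=
      ((hgat p hp).fderiv_right (m := 0) (by simp)).continuousAt
    apply hc
    rw [hg'.fderiv]
    exact ContinuousLinearEquiv.nhds _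
  obtain ⟨O, hO, hOo, hpO⟩ := mem_nhds_iff.1 (Filter.inter_mem hinv (hV.mem_nhds hp))
  let φ₀ := (hgat p hp).toOpenPartialHomeomorph g hg' (by simp)
  let φ := φ₀.restrOpen O hOo
  have hφg : ⇑φ = g := rfl
  have hsrc : φ.source ⊆ O := by
    intro x hx
    have : x ∈ φ₀.source ∩ O := by simpa [φ] using hx
    exact this.2
  refine ⟨φ, ℓ, Y, hY, ?_, hsrc.trans fun x hx => (hO hx).2, ?_, ?_, ?_⟩
  · have : p ∈ φ₀.source ∩ O :=
      ⟨(hgat p hp).mem_toOpenPartialHomeomorph_source hg' (by simp), hpO⟩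
    simpa [φ] using this
  · rw [hφg]
    exact hgsm.mono (hsrc.trans fun x hx => (hO hx).2)
  · intro y hy
    have hx := hsrc (φ.map_target hy)
    obtain ⟨e, he⟩ := (hO hx).1
    have hgx := hgat _ (hO hx).2
    refine (φ.contDiffAt_symm (f₀' := e) hy ?_ hgx).contDiffWithinAt
    rw [he]
    exact (hgx.differentiableAt (by simp)).hasFDerivAt
  · intro x
    rw [hφg]
    simp [hg, hY]

/-- A closed 2-form `σ` with `dl ∧ σ = 0` and `dl(p) ≠ 0` is `dl ∧ dμ` near `p`. This is
`exists_leaf_potential` transported through the chart of `exists_straightening`. -/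
theorem exists_potential {E : Type*} [NormedAddCommGroup E] [NormedSpace ℝ E]
    [FiniteDimensional ℝ E] {V : Set E} (hV : IsOpen V) {p : E} (hp : p ∈ V)
    {l : E → ℝ} (hl : ContDiffOn ℝ (⊤ : ℕ∞) l V) (hdl : fderiv ℝ l p ≠ 0)
    {σ : E → E →L[ℝ] E →L[ℝ] ℝ} (hσ : ContDiffOn ℝ (⊤ : ℕ∞) σ V)
    (hskew : ∀ x ∈ V, ∀ v, σ x v v = 0)
    (hcl : ∀ x ∈ V, ∀ u v w,
      fderiv ℝ σ x u v w - fderiv ℝ σ x v u w + fderiv ℝ σ x w u v = 0)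
    (hwedge : ∀ x ∈ V, ∀ a b c, fderiv ℝ l x a * σ x b c - fderiv ℝ l x b * σ x a c
      + fderiv ℝ l x c * σ x a b = 0) :
    ∃ V' ⊆ V, IsOpen V' ∧ p ∈ V' ∧ ∃ μ : E → ℝ, ContDiffOn ℝ (⊤ : ℕ∞) μ V' ∧
      ∀ x ∈ V', ∀ u v, σ x u v =
        fderiv ℝ l x u * fderiv ℝ μ x v - fderiv ℝ l x v * fderiv ℝ μ x u := by
  obtain ⟨φ, ℓ, Y, hY, hpφ, hφV, hφsm, hψsm, hℓφ⟩ := exists_straightening hV hp hl hdl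
  set ψ := φ.symm with hψdef
  have hψV : ∀ y ∈ φ.target, ψ y ∈ V := fun y hy => hφV (φ.map_target hy)
  have hψat : ∀ y ∈ φ.target, ContDiffAt ℝ (⊤ : ℕ∞) ψ y := fun y hy =>
    hψsm.contDiffAt (φ.open_target.mem_nhds hy)
  have hφat : ∀ x ∈ φ.source, ContDiffAt ℝ (⊤ : ℕ∞) φ x := fun x hx =>
    hφsm.contDiffAt (φ.open_source.mem_nhds hx)
  set τ : E → E →L[ℝ] E →L[ℝ] ℝ :=
    fun z => (σ (ψ z)).bilinearComp (fderiv ℝ ψ z) (fderiv ℝ ψ z) with hτ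
  have hτsm : ContDiffOn ℝ (⊤ : ℕ∞) τ φ.target := by
    have h1 : τ = fun z => ((ContinuousLinearMap.compL ℝ E E ℝ).flip (fderiv ℝ ψ z)).comp
        ((σ (ψ z)).comp (fderiv ℝ ψ z)) := by
      ext z a b; simp [τ]
    have h2 : ContDiffOn ℝ (⊤ : ℕ∞) (fderiv ℝ ψ) φ.target :=
      hψsm.fderiv_of_isOpen φ.open_target (by simp)
    rw [h1]
    exact ((ContinuousLinearMap.contDiff _).comp_contDiffOn h2).clm_comp
      ((hσ.comp hψsm hψV).clm_comp h2)
  have hld : ∀ x ∈ V, DifferentiableAt ℝ l x := fun x hx =>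
    (hl.differentiableOn (by simp)).differentiableAt (hV.mem_nhds hx)
  have hdlψ : ∀ y ∈ φ.target, ∀ u, fderiv ℝ l (ψ y) (fderiv ℝ ψ y u) = ℓ u := by
    intro y hy u
    have h1 : HasFDerivAt (fun z => l (ψ z)) _ y := (hld _ (hψV y hy)).hasFDerivAt.comp y
      ((hψat y hy).differentiableAt (by simp)).hasFDerivAt
    have h2 : (fun z => l (ψ z)) =ᶠ[nhds y] ℓ := by
      filter_upwards [φ.open_target.mem_nhds hy] with z hz
      rw [← hℓφ, hψdef, φ.right_inv hz]
    have h3 := congrArg (fun L => L u) (h1.unique (ℓ.hasFDerivAt.congr_of_eventuallyEq h2))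
    simpa using h3
  obtain ⟨W, hWt, hWo, hqW, μ', hμ'sm, hμ'⟩ := exists_leaf_potential φ.open_target
    (φ.map_source hpφ) hτsm
    (fun y hy => pullback_closed
      ((hσ.differentiableOn (by simp)).differentiableAt (hV.mem_nhds (hψV y hy)))
      (hψat y hy) (hskew _ (hψV y hy)) (hcl _ (hψV y hy)))
    ℓ Y hY (by
      intro y hy a b c
      rw [← hdlψ y hy a, ← hdlψ y hy b, ← hdlψ y hy c]
      exact hwedge _ (hψV y hy) _ _ _)
  refine ⟨φ.source ∩ φ ⁻¹' W, fun x hx => hφV hx.1,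
    φ.continuousOn.isOpen_inter_preimage φ.open_source hWo, ⟨hpφ, hqW⟩, fun x => μ' (φ x),
    hμ'sm.comp (hφsm.mono inter_subset_left) (fun x hx => hx.2), ?_⟩
  rintro x ⟨hx, hxW⟩ u v
  have hφd := ((hφat x hx).differentiableAt (by simp)).hasFDerivAt
  have hψd := ((hψat _ (φ.map_source hx)).differentiableAt (by simp)).hasFDerivAt
  have hμd : HasFDerivAt (fun x => μ' (φ x)) _ x := (((hμ'sm.differentiableOn
    (by simp)).differentiableAt (hWo.mem_nhds hxW)).hasFDerivAt).comp x hφd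
  have hinv : ∀ u, fderiv ℝ ψ (φ x) (fderiv ℝ φ x u) = u := by
    intro u
    have h1 : HasFDerivAt (fun z => ψ (φ z)) _ x := hψd.comp x hφd
    have h2 : (fun z => ψ (φ z)) =ᶠ[nhds x] id := by
      filter_upwards [φ.open_source.mem_nhds hx] with z hz
      exact φ.left_inv hz
    have h3 := congrArg (fun L => L u)
      (h1.unique ((hasFDerivAt_id x).congr_of_eventuallyEq h2))
    simpa using h3
  have hψφ : ψ (φ x) = x := φ.left_inv hx
  have hl' : ∀ u, ℓ (fderiv ℝ φ x u) = fderiv ℝ l x u := by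
    intro u
    rw [← hdlψ _ (φ.map_source hx), hinv, hψφ]
  have h := hμ' (φ x) hxW (fderiv ℝ φ x u) (fderiv ℝ φ x v)
  simp only [hτ, ContinuousLinearMap.bilinearComp_apply, hinv, hψφ, hl'] at h
  rw [h, hμd.fderiv]
  simp

/-! ### The decomposition of the symplectic form -/

theorem differentiableAt_of_contDiffOn {E G : Type*} [NormedAddCommGroup E] [NormedSpace ℝ E]
    [NormedAddCommGroup G] [NormedSpace ℝ G] {V : Set E} (hV : IsOpen V) {f : E → G}
    (hf : ContDiffOn ℝ (⊤ : ℕ∞) f V) {x : E} (hx : x ∈ V) : DifferentiableAt ℝ f x :=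
  (hf.differentiableOn (by simp)).differentiableAt (hV.mem_nhds hx)

theorem extDeriv2_eq {E : Type*} [NormedAddCommGroup E] [NormedSpace ℝ E]
    {ω : E → E →L[ℝ] E →L[ℝ] ℝ} {x : E} (hω : DifferentiableAt ℝ ω x) (u v w : E) :
    extDeriv2 ω x u v w = fderiv ℝ ω x u v w - fderiv ℝ ω x v u w + fderiv ℝ ω x w u v := by
  have key : ∀ a b c, fderiv ℝ (fun y => ω y b c) x a = fderiv ℝ ω x a b c := by
    intro a b c
    have := ((hω.hasFDerivAt.clm_apply (hasFDerivAt_const b x)).clm_apply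
      (hasFDerivAt_const c x)).fderiv
    rw [this]
    simp
  simp only [extDeriv2, key]

theorem nijTorsion_eq {E : Type*} [NormedAddCommGroup E] [NormedSpace ℝ E]
    {N : E → E →L[ℝ] E} {x : E} (hN : DifferentiableAt ℝ N x) (u v : E) :
    nijTorsion N x u v = fderiv ℝ N x (N x u) v - fderiv ℝ N x (N x v) u
      + N x (fderiv ℝ N x v u) - N x (fderiv ℝ N x u v) := by
  have key : ∀ a b, fderiv ℝ (fun y => N y b) x a = fderiv ℝ N x a b := by
    intro a b
    have := (hN.hasFDerivAt.clm_apply (hasFDerivAt_const b x)).fderiv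
    rw [this]
    simp
  simp [nijTorsion, lieVF, key]

theorem isSpectralJet_fderiv {n : ℕ} {E : Type*} [NormedAddCommGroup E] [NormedSpace ℝ E]
    {V : Set E} (hV : IsOpen V) {N : E → E →L[ℝ] E} {lam : Fin n → E → ℝ}
    {P : Fin n → E → E →L[ℝ] E} {x : E} (hx : x ∈ V)
    (hN : DifferentiableAt ℝ N x) (hlam : ∀ i, DifferentiableAt ℝ (lam i) x)
    (hP : ∀ i, DifferentiableAt ℝ (P i) x)
    (hspec : ∀ y ∈ V, IsSpectral (N y) (fun i => lam i y) (fun i => P i y))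
    (hNij : ∀ u v, nijTorsion N x u v = 0) :
    IsSpectralJet (N x) (fun i => lam i x) (fun i => P i x) (fderiv ℝ N x)
      (fun i => fderiv ℝ (lam i) x) (fun i => fderiv ℝ (P i) x) := by
  have hPu : ∀ i u, HasFDerivAt (fun y => P i y u) ((fderiv ℝ (P i) x).flip u) x := by
    intro i u
    refine ((hP i).hasFDerivAt.clm_apply (hasFDerivAt_const u x)).congr_fderiv ?_
    ext a
    simp
  have hev : ∀ {f g : E → E}, (∀ y ∈ V, f y = g y) → f =ᶠ[nhds x] g := fun h =>
    Filter.eventually_of_mem (hV.mem_nhds hx) h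
  have hPP : ∀ i j u a, (fderiv ℝ (fun y => P i y (P j y u)) x) a =
      P i x (fderiv ℝ (P j) x a u) + fderiv ℝ (P i) x a (P j x u) := by
    intro i j u a
    rw [((hP i).hasFDerivAt.clm_apply (hPu j u)).fderiv]
    simp
  refine { hspec x hx with d_self := ?_, d_ne := ?_, d_left := ?_, torsion := ?_ }
  · intro i a u
    have h := hPP i i u a
    rw [(hev (g := fun y => P i y u) fun y hy => (hspec y hy).self i u).fderiv_eq,
      (hPu i u).fderiv] at h
    rw [add_comm]
    exact h.symm
  · intro i j hij a u
    have h := hPP i j u a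
    rw [(hev (g := fun _ => 0) fun y hy => (hspec y hy).ne i j hij u).fderiv_eq] at h
    simp only [fderiv_fun_const, Pi.zero_apply, zero_apply] at h
    exact eq_neg_of_add_eq_zero_right h.symm
  · intro i a u
    have h1 := (hN.hasFDerivAt.clm_apply (hPu i u)).fderiv
    rw [(hev (g := fun y => lam i y • P i y u) fun y hy => (hspec y hy).left i u).fderiv_eq,
      ((hlam i).hasFDerivAt.fun_smul (hPu i u)).fderiv] at h1
    have h2 := congrArg (fun L => L a) h1
    simp at h2
    rw [add_comm, ← h2, add_comm]
  · intro u v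
    rw [← nijTorsion_eq hN, hNij]

/-- The spectral projectors of an `ω`-symmetric endomorphism are `ω`-symmetric, because its
eigenspaces are `ω`-orthogonal. -/
theorem IsSpectral.symm {n : ℕ} {F : Type*} [NormedAddCommGroup F] [NormedSpace ℝ F]
    {A : F →L[ℝ] F} {l : Fin n → ℝ} {P : Fin n → F →L[ℝ] F} (h : IsSpectral A l P)
    (hl : ∀ i j, i ≠ j → l i ≠ l j) {ω : F →L[ℝ] F →L[ℝ] ℝ}
    (hA : ∀ u v, ω (A u) v = ω u (A v)) (i : Fin n) (u v : F) :
    ω (P i u) v = ω u (P i v) := by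
  have h0 : ∀ i j, i ≠ j → ∀ u v, ω (P i u) (P j v) = 0 := by
    intro i j hij u v
    have h1 := hA (P i u) (P j v)
    rw [h.left, h.left] at h1
    simp only [map_smul, smul_apply, smul_eq_mul] at h1
    exact (mul_eq_zero.1 (show (l i - l j) * ω (P i u) (P j v) = 0 by linarith)).resolve_left
      (sub_ne_zero.2 (hl i j hij))
  have e1 : ω (P i u) v = ω (P i u) (P i v) := by
    conv_lhs => rw [← h.sum_apply v, map_sum]
    exact Finset.sum_eq_single i (fun j _ hj => h0 i j hj.symm u v) (by simp)
  have e2 : ω u (P i v) = ω (P i u) (P i v) := by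
    conv_lhs => rw [← h.sum_apply u, map_sum, _root_.sum_apply]
    exact Finset.sum_eq_single i (fun j _ hj => h0 j i hj u v) (by simp)
  rw [e1, e2]

/-- `dl ∧ ω(P ·, ·) = 0`: a 3-form factoring through `P`, whose range is spanned by two vectors. -/
theorem wedge_eq_zero {F : Type*} [NormedAddCommGroup F] [NormedSpace ℝ F]
    {ω : F →L[ℝ] F →L[ℝ] ℝ} (hskew : ∀ v, ω v v = 0) {P : F →L[ℝ] F}
    (hPP : ∀ u, P (P u) = P u) (hsymm : ∀ u v, ω (P u) v = ω u (P v))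
    {dl : F →L[ℝ] ℝ} (hdl : ∀ u, dl (P u) = dl u) {e : Fin 2 → F}
    (he : ∀ u, ∃ c : Fin 2 → ℝ, P u = c 0 • e 0 + c 1 • e 1) (a b c : F) :
    dl a * ω (P b) c - dl b * ω (P a) c + dl c * ω (P a) b = 0 := by
  have hsw : ω (e 1) (e 0) = - ω (e 0) (e 1) := by
    have := hskew (e 0 + e 1)
    simp [hskew] at this
    linarith
  have hPs : ∀ u v, ω (P u) v = ω (P u) (P v) := fun u v => by rw [← hsymm, hPP]
  obtain ⟨α, hα⟩ := he a
  obtain ⟨β, hβ⟩ := he b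
  obtain ⟨γ, hγ⟩ := he c
  rw [hPs b c, hPs a c, hPs a b, ← hdl a, ← hdl b, ← hdl c, hα, hβ, hγ]
  simp only [map_add, map_smul, add_apply, smul_apply, smul_eq_mul, hskew, hsw]
  ring

theorem linearIndependent_of_separating {ι F : Type*} [Fintype ι] [NormedAddCommGroup F]
    [NormedSpace ℝ F] [FiniteDimensional ℝ F] (f : ι → F →L[ℝ] ℝ)
    (hcard : Fintype.card ι = finrank ℝ F) (hf : ∀ v, (∀ i, f i v = 0) → v = 0) :
    LinearIndependent ℝ f := by
  let T : F →ₗ[ℝ] (ι → ℝ) := LinearMap.pi fun i => (f i : F →ₗ[ℝ] ℝ)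
  have hT : Function.Injective T := by
    rw [injective_iff_map_eq_zero]
    exact fun v hv => hf v fun i => congrFun hv i
  have hTs : Function.Surjective T :=
    (LinearMap.injective_iff_surjective_of_finrank_eq_finrank (by simp [hcard])).1 hT
  classical
  rw [Fintype.linearIndependent_iff]
  intro c hc i
  obtain ⟨v, hv⟩ := hTs (Pi.single i 1)
  have h1 := congrArg (fun L => L v) hc
  have h2 : ∀ j, f j v = (Pi.single i 1 : ι → ℝ) j := fun j => congrFun hv j
  simpa [_root_.sum_apply, h2, Pi.single_apply] using h1

/-- Let `(M, ω₁, N)` be an `ωN` manifold of dimension `2n`.  Then each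
regular point `p` (where the eigenvalue functions `λ₁, …, λ_n` of `N` are pairwise
distinct and their differentials are linearly independent) has an open neighborhood `V`
admitting coordinates `(λ₁, …, λ_n, μ₁, …, μ_n)` — i.e. `2n` smooth functions whose
differentials are linearly independent at each point of `V` — such that
(1) `ω₁ = ∑ i, dλ_i ∧ dμ_i`, and (2) `N* dλ_i = λ_i dλ_i` and `N* dμ_i = λ_i dμ_i`. -/
theorem darboux_nijenhuis_coordinates
    {E : Type*} [NormedAddCommGroup E] [NormedSpace ℝ E] [FiniteDimensional ℝ E]
    {n : ℕ} (hdim : finrank ℝ E = 2 * n)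
    (U : Set E) (hU : IsOpen U)
    (ω : E → E →L[ℝ] E →L[ℝ] ℝ) (hωsm : ContDiffOn ℝ (⊤ : ℕ∞) ω U)
    (hskew : IsSkewOn ω U) (hnd : IsNondegOn ω U) (hcl : IsClosed2On ω U)
    (N : E → E →L[ℝ] E) (hNsm : ContDiffOn ℝ (⊤ : ℕ∞) N U)
    (hNij : ∀ x ∈ U, ∀ u v : E, nijTorsion N x u v = 0)
    (hcompat : ∀ x ∈ U, ∀ u v : E, ω x (N x u) v = ω x u (N x v))
    (hΩcl : IsClosed2On (fun y => (ω y).comp (N y)) U)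
    (lam : Fin n → E → ℝ) (hlamsm : ∀ i, ContDiffOn ℝ (⊤ : ℕ∞) (lam i) U)
    (heig : ∀ i, ∀ x ∈ U, ∃ v : E, v ≠ 0 ∧ N x v = lam i x • v)
    (p : E) (hp : p ∈ U)
    (hdist : ∀ i j, i ≠ j → lam i p ≠ lam j p)
    (hindep : LinearIndependent ℝ (fun i => fderiv ℝ (lam i) p)) :
    ∃ V : Set E, IsOpen V ∧ p ∈ V ∧ V ⊆ U ∧
      ∃ mu : Fin n → E → ℝ,
        (∀ i, ContDiffOn ℝ (⊤ : ℕ∞) (mu i) V) ∧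
        (∀ x ∈ V, LinearIndependent ℝ
          (Sum.elim (fun i => fderiv ℝ (lam i) x) (fun i => fderiv ℝ (mu i) x))) ∧
        (∀ x ∈ V, ∀ u v : E, ω x u v =
          ∑ i, (fderiv ℝ (lam i) x u * fderiv ℝ (mu i) x v
            - fderiv ℝ (lam i) x v * fderiv ℝ (mu i) x u)) ∧
        (∀ x ∈ V, ∀ i, ∀ v : E,
          fderiv ℝ (lam i) x (N x v) = lam i x * fderiv ℝ (lam i) x v ∧
          fderiv ℝ (mu i) x (N x v) = lam i x * fderiv ℝ (mu i) x v) := by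
  have hdistev : ∀ᶠ x in nhds p, x ∈ U ∧ ∀ i j, i ≠ j → lam i x ≠ lam j x := by
    refine (hU.eventually_mem hp).and ?_
    simp only [Filter.eventually_all]
    intro i j hij
    have hc := fun k => (hlamsm k).continuousOn.continuousAt (hU.mem_nhds hp)
    exact (((hc i).sub (hc j)).eventually_ne (sub_ne_zero.2 (hdist i j hij))).mono
      fun x hx => sub_ne_zero.1 hx
  obtain ⟨V, hV, hVo, hpV⟩ := mem_nhds_iff.1 hdistev
  have hVU : V ⊆ U := fun x hx => (hV hx).1
  have hVd : ∀ x ∈ V, ∀ i j, i ≠ j → lam i x ≠ lam j x := fun x hx => (hV hx).2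
  have hωV := hωsm.mono hVU
  have hNV := hNsm.mono hVU
  have hlamV := fun i => (hlamsm i).mono hVU
  have hbas : ∀ x ∈ V, ∃ b : Basis (Fin n × Fin 2) ℝ E,
      ∀ i k, N x (b (i, k)) = lam i x • b (i, k) := fun x hx =>
    exists_eigenbasis (LinearMap.mk₂ ℝ (fun u v => ω x u v) (by simp) (by simp) (by simp)
        (by simp)) hdim
      (hskew x (hVU hx)) (hnd x (hVU hx)) (N x : E →ₗ[ℝ] E) (hcompat x (hVU hx))
      (fun i => lam i x) (hVd x hx) fun i => heig i x (hVU hx)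
  obtain ⟨P, hPsm, hspec, hPe⟩ := exists_projectors hNV hlamV hVd hbas
  have hjet : ∀ x ∈ V, IsSpectralJet (N x) (fun i => lam i x) (fun i => P i x) (fderiv ℝ N x)
      (fun i => fderiv ℝ (lam i) x) (fun i => fderiv ℝ (P i) x) := fun x hx =>
    isSpectralJet_fderiv hVo hx (differentiableAt_of_contDiffOn hVo hNV hx)
      (fun i => differentiableAt_of_contDiffOn hVo (hlamV i) hx)
      (fun i => differentiableAt_of_contDiffOn hVo (hPsm i) hx) hspec (hNij x (hVU hx))
  have hsymm : ∀ x ∈ V, ∀ i u v, ω x (P i x u) v = ω x u (P i x v) := fun x hx =>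
    (hspec x hx).symm (hVd x hx) (hcompat x (hVU hx))
  have hPfix : ∀ x ∈ V, ∀ i, ∃ u, P i x u = u ∧ u ≠ 0 := fun x hx i => by
    obtain ⟨e, he, he0, -⟩ := hPe x hx i
    exact ⟨e 0, he 0, he0⟩
  have hdlP : ∀ x ∈ V, ∀ i v, fderiv ℝ (lam i) x (P i x v) = fderiv ℝ (lam i) x v :=
    fun x hx => (hjet x hx).dl_comp (hVd x hx) (hPfix x hx)
  -- the components of `ω`, supported on the individual eigenplanes
  let σ : Fin n → E → E →L[ℝ] E →L[ℝ] ℝ := fun i x => (ω x).comp (P i x)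
  have hσsm : ∀ i, ContDiffOn ℝ (⊤ : ℕ∞) (σ i) V := fun i => hωV.clm_comp (hPsm i)
  have hσskew : ∀ i, ∀ x ∈ V, ∀ v, σ i x v v = 0 := by
    intro i x hx v
    have h1 : σ i x v v = ω x (P i x v) (P i x v) := by
      rw [← hsymm x hx, (hspec x hx).self]
      rfl
    rw [h1, hskew x (hVU hx)]
  have hdσ : ∀ i, ∀ x ∈ V, ∀ a u v, fderiv ℝ (σ i) x a u v =
      fderiv ℝ ω x a (P i x u) v + ω x (fderiv ℝ (P i) x a u) v := by
    intro i x hx a u v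
    rw [((differentiableAt_of_contDiffOn hVo hωV hx).hasFDerivAt.clm_comp
      (differentiableAt_of_contDiffOn hVo (hPsm i) hx).hasFDerivAt).fderiv]
    simp [add_comm]
  have hdσskew : ∀ i, ∀ x ∈ V, ∀ a u v, fderiv ℝ (σ i) x a u v = - fderiv ℝ (σ i) x a v u := by
    intro i x hx a u v
    have hd : ∀ u v, HasFDerivAt (fun y => σ i y u v) (((fderiv ℝ (σ i) x).flip u).flip v) x := by
      intro u v
      refine (((differentiableAt_of_contDiffOn hVo (hσsm i) hx).hasFDerivAt.clm_apply
        (hasFDerivAt_const u x)).clm_apply (hasFDerivAt_const v x)).congr_fderiv ?_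
      ext b
      simp
    have hev : (fun y => σ i y u v) =ᶠ[nhds x] fun y => - σ i y v u := by
      filter_upwards [hVo.mem_nhds hx] with y hy
      have := hσskew i y hy (u + v)
      simp only [map_add, add_apply, hσskew i y hy] at this
      linarith
    exact congrArg (fun L => L a) (((hd u v).congr_of_eventuallyEq hev.symm).unique (hd v u).neg)
  have hσcl : ∀ i, ∀ x ∈ V, ∀ u v w, fderiv ℝ (σ i) x u v w - fderiv ℝ (σ i) x v u w
      + fderiv ℝ (σ i) x w u v = 0 := fun i x hx =>
    (hjet x hx).closed (hVd x hx) i (hsymm x hx i)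
      (fun u v w => by
        rw [← extDeriv2_eq (differentiableAt_of_contDiffOn hVo hωV hx)]
        exact hcl x (hVU hx) u v w)
      (hdσ i x hx) (hdσskew i x hx)
  have hwedge : ∀ i, ∀ x ∈ V, ∀ a b c, fderiv ℝ (lam i) x a * σ i x b c
      - fderiv ℝ (lam i) x b * σ i x a c + fderiv ℝ (lam i) x c * σ i x a b = 0 := by
    intro i x hx
    obtain ⟨e, -, -, he⟩ := hPe x hx i
    exact wedge_eq_zero (hskew x (hVU hx)) ((hspec x hx).self i) (hsymm x hx i) (hdlP x hx i) he
  have hpot := fun i => exists_potential hVo hpV (hlamV i) (hindep.ne_zero i) (hσsm i)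
    (hσskew i) (hσcl i) (hwedge i)
  choose W hWV hWo hpW mu hmusm hmu using hpot
  have hsum : ∀ x ∈ V ∩ ⋂ i, W i, ∀ u v : E, ω x u v =
      ∑ i, (fderiv ℝ (lam i) x u * fderiv ℝ (mu i) x v
        - fderiv ℝ (lam i) x v * fderiv ℝ (mu i) x u) := by
    rintro x ⟨hxV, hxW⟩ u v
    conv_lhs => rw [← (hspec x hxV).sum_apply u, map_sum, _root_.sum_apply]
    exact Finset.sum_congr rfl fun i _ => hmu i x (mem_iInter.1 hxW i) u v
  refine ⟨V ∩ ⋂ i, W i, hVo.inter (isOpen_iInter_of_finite hWo), ⟨hpV, mem_iInter.2 hpW⟩,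
    fun x hx => hVU hx.1, mu, ?_, ?_, hsum, ?_⟩
  · exact fun i => (hmusm i).mono fun x hx => mem_iInter.1 hx.2 i
  · intro x hx
    -- a vector killed by all the differentials is in the kernel of `ω`
    refine linearIndependent_of_separating _ (by simp [hdim, two_mul]) fun v hv => ?_
    refine hnd x (hVU hx.1) v fun w => ?_
    rw [hsum x hx]
    refine Finset.sum_eq_zero fun i _ => ?_
    have h1 : fderiv ℝ (lam i) x v = 0 := hv (Sum.inl i)
    have h2 : fderiv ℝ (mu i) x v = 0 := hv (Sum.inr i)
    rw [h1, h2]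
    ring
  · rintro x ⟨hxV, hxW⟩ i v
    -- both differentials kill `N v - λ_i v`, which has no component in the `i`-th eigenplane
    have hPz : P i x (N x v - lam i x • v) = 0 := by
      rw [map_sub, (hspec x hxV).right, map_smul, sub_self]
    have h1 : fderiv ℝ (lam i) x (N x v - lam i x • v) = 0 := by
      rw [← hdlP x hxV i, hPz, map_zero]
    have h2 : fderiv ℝ (mu i) x (N x v - lam i x • v) = 0 := by
      by_contra hne
      have hmui := hmu i x (mem_iInter.1 hxW i)
      -- otherwise `dλ_i` vanishes, and with it `σ i`
      have h3 : ∀ w, fderiv ℝ (lam i) x w = 0 := by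
        intro w
        have h4 := hmui (N x v - lam i x • v) w
        have h5 : σ i x (N x v - lam i x • v) w = 0 := by
          change ω x (P i x (N x v - lam i x • v)) w = 0
          rw [hPz, map_zero, zero_apply]
        rw [h5, h1, zero_mul, zero_sub] at h4
        exact (mul_eq_zero.1 (neg_eq_zero.1 h4.symm)).resolve_right hne
      obtain ⟨u, hu, hu0⟩ := hPfix x hxV i
      refine hu0 (hnd x (hVU hxV) u fun w => ?_)
      have h6 : σ i x u w = ω x u w := by
        change ω x (P i x u) w = _
        rw [hu]
      rw [← h6, hmui, h3, h3]
      ring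
    rw [map_sub, map_smul, smul_eq_mul, sub_eq_zero] at h1 h2
    exact ⟨h1, h2⟩
end
end
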